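/- arXiv:1007.4932 — 3 statements merged into one kernel-verified Lean document; each statement's English description precedes it below -/
import Mathlib

section
/- Let 1 < a ≤ b ≤ 2, let α : ℝ → [a,b] be Lebesgue measurable, let f : ℝ × ℝ → ℝ be such that f(t,·) ∈ F_α for all t ∈ ℝ, and let Y = {Y(t) : t ∈ ℝ} be a stochastic process such that for all d, all t₁,…,t_d ∈ ℝ and all θ ∈ ℝ^d, 𝔼[exp(i Σ_{j=1}^d θ_j Y(t_j))] = exp(−∫_ℝ |Σ_{j=1}^d θ_j f(t_j,x)|^{α(x)} dx). Suppose there exists η with 1/a < η < 1 such that for each bounded interval I there is c > 0 with ‖f(t,·) − f(u,·)‖_α ≤ c|t−u|^η for all t,u ∈ I. Then Y has a continuous version which, on each bounded interval, almost surely satisfies a β-Hölder condition for every 0 < β < (ηa − 1)/a. -/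
/-!
The increment `X = Y t - Y v` has characteristic function `θ ↦ exp (-∫ |θ g|^α)` with
`g = f t - f v`. If `∫ |g / l|^α = 1`, then `∫ |θ g|^α ≤ (|θ| l)^a` as soon as `|θ| l ≤ 1`, because
`α ≥ a`; hence `1 - φ_X(θ) ≤ (|θ| l)^a` for every `θ`. The truncation inequality bounding
the tail of a law by an average of `1 - φ_X` near zero turns this into `P(|X| > r) ≤ 8 (l / r)^a`
(`increment_tail`), so the Hölder hypothesis gives `P(|Y t - Y v| > r) ≤ K (|t - v|^η / r)^a` on
bounded intervals (`process_tail`). Since `alphaNorm` is an infimum over a set that could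
be empty, one has to check that a normalising `l` exists whenever `g` is not a.e. zero
(`exists_normalizer`, by the intermediate value theorem).

The rest is the dyadic chaining argument of Kolmogorov and Chentsov, run directly on the weak-type
tail bound rather than on moments. At level `n` there are about `2 ^ n` dyadic increments in
a bounded interval, each exceeding `2 ^ (-β n)` with probability at most
`K 2 ^ (-(η - β) a n)`; these probabilities are summable when `β < η - 1 / a`, so by Borel–Cantelli
almost every path has `GoodDyadic` increments (`ae_goodDyadic`). For such a path the values at the
dyadic approximations `⌊2 ^ n t⌋ / 2 ^ n` converge to a limit `dyadicLim`, which is `β`-Hölder on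
bounded intervals (`GoodDyadic.holder`). The limit is almost surely `Y t` for each fixed `t`,
again by Borel–Cantelli (`ae_tendsto_dyadic`).
-/

open MeasureTheory Filter Set Topology ProbabilityTheory BoundedContinuousFunction

noncomputable section

/-- Membership in `F_α`: `f` is measurable and either a.e. zero or there is a (unique)
`λ > 0` with `∫ |f(x)/λ|^{α(x)} dx = 1`. -/
def MemFalpha (α f : ℝ → ℝ) : Prop :=
  Measurable f ∧ (f =ᵐ[volume] (0 : ℝ → ℝ) ∨ ∃ lam > (0:ℝ), ∫ x : ℝ, |f x / lam| ^ α x = 1)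

/-- The quasinorm `‖f‖_α`, the unique `λ > 0` with `∫ |f(x)/λ|^{α(x)} dx = 1`
(and `0` if no such `λ` exists, e.g. if `f = 0` a.e.). -/
def alphaNorm (α f : ℝ → ℝ) : ℝ :=
  sInf {lam : ℝ | 0 < lam ∧ ∫ x : ℝ, |f x / lam| ^ α x = 1}

/-- `|s|^{a,b} = max{|s|^a, |s|^b}`. -/
def pab (a b s : ℝ) : ℝ := max (|s| ^ a) (|s| ^ b)

/-- Membership in `F_{a,b}`: measurable with `∫ |f(x)|^{a,b} dx < ∞`. -/
def MemFab (a b : ℝ) (f : ℝ → ℝ) : Prop :=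
  Measurable f ∧ Integrable (fun x : ℝ => pab a b (f x))

/-- The norm `‖f‖_p = (∫ |f(x)|^p dx)^{1/p}`. -/
def pNorm (p : ℝ) (f : ℝ → ℝ) : ℝ := (∫ x : ℝ, |f x| ^ p) ^ (1 / p)

/-- Membership in `E₀`: Lebesgue measurable with finite Lebesgue measure. -/
def MemE0 (A : Set ℝ) : Prop := MeasurableSet A ∧ volume A < ⊤

/-! ### The modular `∫ |g|^α` and the existence of a normaliser -/

lemma memFalpha_integrable {a b : ℝ} (ha : 1 < a) (hb : b ≤ 2) {α : ℝ → ℝ} (hαm : Measurable α)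
    (hα : ∀ x, α x ∈ Set.Icc a b) {f : ℝ → ℝ} (hf : MemFalpha α f) :
    Integrable (fun x => |f x| ^ α x) := by
  obtain ⟨hm, h0 | ⟨l, hl, h1⟩⟩ := hf
  · refine (integrable_zero ℝ ℝ volume).congr ?_
    filter_upwards [h0] with x hx
    have : α x ≠ 0 := by have := (hα x).1; linarith
    simp [hx, Real.zero_rpow this]
  · have hi : Integrable (fun x => |f x / l| ^ α x) := by
      by_contra hn
      rw [integral_undef hn] at h1
      exact zero_ne_one h1
    refine (hi.const_mul ((max l 1) ^ (2:ℝ))).mono'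
      ((hm.abs.pow hαm).aestronglyMeasurable) (ae_of_all _ fun x => ?_)
    have hx := hα x
    rw [Real.norm_of_nonneg (by positivity)]
    calc |f x| ^ α x = (l * |f x / l|) ^ α x := by
          rw [abs_div, abs_of_pos hl, mul_div_cancel₀ _ hl.ne']
      _ = l ^ α x * |f x / l| ^ α x := Real.mul_rpow hl.le (abs_nonneg _)
      _ ≤ (max l 1) ^ (2:ℝ) * |f x / l| ^ α x := by
          gcongr
          calc l ^ α x ≤ (max l 1) ^ α x :=
                Real.rpow_le_rpow hl.le (le_max_left _ _) (by linarith [hx.1])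
            _ ≤ _ := Real.rpow_le_rpow_of_exponent_le (le_max_right _ _) (by linarith [hx.2])

lemma integrable_modular_sub {a b : ℝ} (ha : 1 < a) (hb : b ≤ 2) {α : ℝ → ℝ} (hαm : Measurable α)
    (hα : ∀ x, α x ∈ Set.Icc a b) {f g : ℝ → ℝ} (hf : Measurable f) (hg : Measurable g)
    (hfi : Integrable (fun x => |f x| ^ α x)) (hgi : Integrable (fun x => |g x| ^ α x)) :
    Integrable (fun x => |f x - g x| ^ α x) := by
  refine ((hfi.add hgi).const_mul ((2:ℝ) ^ (2:ℝ))).mono'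
    (((hf.sub hg).abs.pow hαm).aestronglyMeasurable) (ae_of_all _ fun x => ?_)
  have hx := hα x
  have h0 : 0 ≤ α x := by linarith [hx.1]
  rw [Real.norm_of_nonneg (by positivity)]
  have h1 : |f x - g x| ≤ 2 * max |f x| |g x| := by
    have := abs_sub (f x) (g x)
    linarith [le_max_left |f x| |g x|, le_max_right |f x| |g x|]
  have hm0 : 0 ≤ max |f x| |g x| := le_max_of_le_left (abs_nonneg _)
  calc |f x - g x| ^ α x ≤ (2 * max |f x| |g x|) ^ α x :=
        Real.rpow_le_rpow (abs_nonneg _) h1 h0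
    _ = 2 ^ α x * (max |f x| |g x|) ^ α x := Real.mul_rpow (by norm_num) hm0
    _ ≤ 2 ^ (2:ℝ) * (|f x| ^ α x + |g x| ^ α x) := by
        gcongr
        · norm_num
        · linarith [hx.2]
        · have hp : 0 ≤ |f x| ^ α x := by positivity
          have hq : 0 ≤ |g x| ^ α x := by positivity
          rcases max_choice |f x| |g x| with h | h <;> rw [h] <;> linarith

/-- If `g` has finite modular and is not a.e. zero, then the set defining `alphaNorm α g` is
nonempty: `s ↦ ∫ |s g|^α` is continuous, vanishes at `0` and grows at least linearly for `s ≥ 1`. -/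
lemma exists_normalizer {a b : ℝ} (ha : 1 < a) (hb : b ≤ 2) {α : ℝ → ℝ} (hαm : Measurable α)
    (hα : ∀ x, α x ∈ Set.Icc a b) {g : ℝ → ℝ} (hg : Measurable g)
    (hgi : Integrable (fun x => |g x| ^ α x)) (hne : ¬ g =ᵐ[volume] 0) :
    ∃ l > (0:ℝ), ∫ x : ℝ, |g x / l| ^ α x = 1 := by
  have hα0 : ∀ x, 0 < α x := fun x => by linarith [(hα x).1]
  set J : ℝ → ℝ := fun s => ∫ x : ℝ, |s * g x| ^ α x with hJ
  have hJ0 : J 0 = 0 := by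
    simp only [hJ, zero_mul, abs_zero]
    rw [integral_congr_ae (g := fun _ => (0:ℝ)) (ae_of_all _ fun x => Real.zero_rpow (hα0 x).ne')]
    simp
  have hpos : 0 < ∫ x : ℝ, |g x| ^ α x := by
    refine lt_of_le_of_ne (integral_nonneg fun x => by positivity) fun h => hne ?_
    have := (integral_eq_zero_iff_of_nonneg (fun x => by positivity) hgi).1 h.symm
    filter_upwards [this] with x hx
    have hx' : |g x| ^ α x = 0 := hx
    simpa using (Real.rpow_eq_zero (abs_nonneg _) (hα0 x).ne').1 hx'
  set A := ∫ x : ℝ, |g x| ^ α x with hA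
  set S : ℝ := max 1 (1 / A) with hS
  have hS1 : 1 ≤ S := le_max_left _ _
  have hS0 : 0 < S := by linarith
  have hdom : ∀ s ∈ Set.Icc (0:ℝ) S, ∀ x, |s * g x| ^ α x ≤ S ^ (2:ℝ) * |g x| ^ α x := by
    intro s hs x
    rw [abs_mul, Real.mul_rpow (abs_nonneg _) (abs_nonneg _), abs_of_nonneg hs.1]
    gcongr
    calc s ^ α x ≤ S ^ α x := Real.rpow_le_rpow hs.1 hs.2 (hα0 x).le
      _ ≤ _ := Real.rpow_le_rpow_of_exponent_le hS1 (by linarith [(hα x).2])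
  have hmeas : ∀ s : ℝ, AEStronglyMeasurable (fun x => |s * g x| ^ α x) volume := fun s =>
    (((hg.const_mul s).abs).pow hαm).aestronglyMeasurable
  have hcont : ContinuousOn J (Set.Icc 0 S) := by
    refine continuousOn_of_dominated (bound := fun x => S ^ (2:ℝ) * |g x| ^ α x)
      (fun s _ => hmeas s) (fun s hs => ae_of_all _ fun x => ?_) (hgi.const_mul _)
      (ae_of_all _ fun x => ?_)
    · rw [Real.norm_of_nonneg (by positivity)]
      exact hdom s hs x
    · exact ((Continuous.rpow_const (by fun_prop) fun s => Or.inr (hα0 x).le)).continuousOn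
  have hJS : 1 ≤ J S := by
    have hle : S * A ≤ J S := by
      rw [hA, ← integral_const_mul]
      refine integral_mono (hgi.const_mul _) (((hgi.const_mul (S ^ (2:ℝ)))).mono' (hmeas S)
        (ae_of_all _ fun x => ?_)) fun x => ?_
      · rw [Real.norm_of_nonneg (by positivity)]
        exact hdom S ⟨hS0.le, le_rfl⟩ x
      · simp only
        rw [abs_mul, Real.mul_rpow (abs_nonneg _) (abs_nonneg _), abs_of_pos hS0]
        gcongr
        calc S = S ^ (1:ℝ) := (Real.rpow_one S).symm
          _ ≤ S ^ α x := Real.rpow_le_rpow_of_exponent_le hS1 (by linarith [(hα x).1])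
    have : 1 / A * A ≤ S * A := by gcongr; exact le_max_right _ _
    rw [div_mul_cancel₀ _ hpos.ne'] at this
    linarith
  obtain ⟨s, hs, hs1⟩ := intermediate_value_Icc hS0.le hcont
    (show (1:ℝ) ∈ Set.Icc (J 0) (J S) from ⟨by rw [hJ0]; norm_num, hJS⟩)
  have hs0 : 0 < s := by
    refine lt_of_le_of_ne hs.1 fun h => ?_
    rw [← h, hJ0] at hs1
    exact zero_ne_one hs1
  refine ⟨s⁻¹, inv_pos.2 hs0, ?_⟩
  rw [← hs1]
  simp only [hJ, div_inv_eq_mul, mul_comm]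

/-- The characteristic function estimate `1 - φ(θ) ≤ (|θ| l)^a`. -/
lemma one_sub_exp_modular_le {a b : ℝ} (ha : 1 < a) {α : ℝ → ℝ}
    (hα : ∀ x, α x ∈ Set.Icc a b) {g : ℝ → ℝ} {l : ℝ} (hl : 0 < l)
    (h1 : ∫ x : ℝ, |g x / l| ^ α x = 1) (θ : ℝ) :
    1 - Real.exp (-(∫ x : ℝ, |θ * g x| ^ α x)) ≤ (|θ| * l) ^ a := by
  have hi : Integrable (fun x => |g x / l| ^ α x) := by
    by_contra hn
    rw [integral_undef hn] at h1
    exact zero_ne_one h1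
  have hnn : 0 ≤ |θ| * l := by positivity
  by_cases hθ : |θ| * l ≤ 1
  · have hle : ∫ x : ℝ, |θ * g x| ^ α x ≤ (|θ| * l) ^ a := by
      calc ∫ x : ℝ, |θ * g x| ^ α x ≤ ∫ x : ℝ, (|θ| * l) ^ a * |g x / l| ^ α x := by
            refine integral_mono_of_nonneg (ae_of_all _ fun x => by positivity)
              (hi.const_mul _) (ae_of_all _ fun x => ?_)
            have hx := (hα x).1
            have e : |θ * g x| = (|θ| * l) * |g x / l| := by
              rw [abs_mul, abs_div, abs_of_pos hl]; field_simp
            simp only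
            rw [e, Real.mul_rpow hnn (abs_nonneg _)]
            gcongr ?_ * _
            -- the base is at most `1`, but possibly `0`; both exponents are positive
            exact Real.rpow_le_rpow_of_exponent_ge_of_imp hnn hθ hx (by intro _ h; linarith)
        _ = _ := by rw [integral_const_mul, h1, mul_one]
    have := Real.add_one_le_exp (-(∫ x : ℝ, |θ * g x| ^ α x))
    linarith
  · have : 1 ≤ (|θ| * l) ^ a := Real.one_le_rpow (not_le.1 hθ).le (by linarith)
    have := Real.exp_pos (-(∫ x : ℝ, |θ * g x| ^ α x))
    linarith

/-! ### Tail bounds for increments -/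

/-- Weak-type tail bound for a random variable whose characteristic function is
`θ ↦ exp (-∫ |θ g|^α)`. -/
lemma increment_tail {Ω : Type*} [MeasurableSpace Ω] (P : Measure Ω) [IsProbabilityMeasure P]
    {a b : ℝ} (ha : 1 < a) (ha2 : a ≤ 2) {α : ℝ → ℝ}
    (hα : ∀ x, α x ∈ Set.Icc a b) {g : ℝ → ℝ} {X : Ω → ℝ} (hX : Measurable X)
    (hcf : ∀ θ : ℝ, ∫ ω, Complex.exp (Complex.I * ((θ * X ω : ℝ) : ℂ)) ∂P =
        ((Real.exp (-(∫ x : ℝ, |θ * g x| ^ α x)) : ℝ) : ℂ))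
    {l : ℝ} (hl : 0 < l) (hg : g =ᵐ[volume] 0 ∨ ∫ x : ℝ, |g x / l| ^ α x = 1)
    {r : ℝ} (hr : 0 < r) :
    P.real {ω | r < |X ω|} ≤ 8 * (l / r) ^ a := by
  have hα0 : ∀ x, 0 < α x := fun x => by linarith [(hα x).1]
  have hbd : ∀ θ : ℝ, 1 - Real.exp (-(∫ x : ℝ, |θ * g x| ^ α x)) ≤ (|θ| * l) ^ a := by
    intro θ
    rcases hg with h0 | h1
    · have : ∫ x : ℝ, |θ * g x| ^ α x = 0 := by
        rw [integral_congr_ae (g := fun _ => (0:ℝ))]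
        · simp
        · filter_upwards [h0] with x hx
          simp [hx, Real.zero_rpow (hα0 x).ne']
      rw [this]
      simp only [neg_zero, Real.exp_zero, sub_self]
      positivity
    · exact one_sub_exp_modular_le ha hα hl h1 θ
  set μ := P.map X with hμ
  have : IsProbabilityMeasure μ := Measure.isProbabilityMeasure_map hX.aemeasurable
  have hchar : ∀ θ : ℝ, charFun μ θ = ((Real.exp (-(∫ x : ℝ, |θ * g x| ^ α x)) : ℝ) : ℂ) := by
    intro θ
    rw [← hcf θ, charFun_apply_real, hμ, integral_map hX.aemeasurable (by fun_prop)]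
    congr 1 with ω
    push_cast
    ring_nf
  have hmap : P.real {ω | r < |X ω|} = μ.real {x | r < |x|} := by
    have hms : MeasurableSet {x : ℝ | r < |x|} :=
      measurableSet_lt measurable_const (by fun_prop)
    rw [hμ, map_measureReal_apply hX hms]
    rfl
  rw [hmap]
  have hint : ‖∫ t in (-2 * r⁻¹)..(2 * r⁻¹), 1 - charFun μ t‖ ≤
      (2 * r⁻¹ * l) ^ a * |2 * r⁻¹ - (-2 * r⁻¹)| := by
    refine intervalIntegral.norm_integral_le_of_norm_le_const fun θ hθ => ?_
    have hr' : 0 < r⁻¹ := inv_pos.2 hr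
    rw [Set.uIoc_of_le (by linarith)] at hθ
    have hθ' : |θ| ≤ 2 * r⁻¹ := abs_le.2 ⟨by linarith [hθ.1], hθ.2⟩
    have hI : 0 ≤ ∫ x : ℝ, |θ * g x| ^ α x := integral_nonneg fun x => by positivity
    have he : Real.exp (-(∫ x : ℝ, |θ * g x| ^ α x)) ≤ 1 := Real.exp_le_one_iff.2 (by linarith)
    rw [hchar, ← Complex.ofReal_one, ← Complex.ofReal_sub, Complex.norm_real,
      Real.norm_of_nonneg (by linarith)]
    refine (hbd θ).trans ?_
    gcongr
  have h4 : (2:ℝ) ^ a ≤ 4 := by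
    calc (2:ℝ) ^ a ≤ 2 ^ (2:ℝ) := Real.rpow_le_rpow_of_exponent_le (by norm_num) ha2
      _ = 4 := by norm_num
  calc μ.real {x | r < |x|} ≤ 2⁻¹ * r * ‖∫ t in (-2 * r⁻¹)..(2 * r⁻¹), 1 - charFun μ t‖ :=
        measureReal_abs_gt_le_integral_charFun hr
    _ ≤ 2⁻¹ * r * ((2 * r⁻¹ * l) ^ a * |2 * r⁻¹ - (-2 * r⁻¹)|) := by gcongr
    _ = 2 * (2 ^ a * (l / r) ^ a) := by
        rw [show 2 * r⁻¹ - (-2 * r⁻¹) = 4 * r⁻¹ by ring, abs_of_pos (by positivity),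
          show 2 * r⁻¹ * l = 2 * (l / r) by ring, Real.mul_rpow (by norm_num) (by positivity)]
        field_simp
        ring
    _ ≤ 8 * (l / r) ^ a := by
        have : 0 ≤ (l / r) ^ a := by positivity
        nlinarith

/-- The Hölder hypothesis on `alphaNorm` turns `increment_tail` into a tail bound for `Y t - Y v`
that is uniform over `t, v ∈ [-T, T]`. -/
lemma process_tail {Ω : Type*} [MeasurableSpace Ω]
    (P : Measure Ω) [IsProbabilityMeasure P]
    (a b : ℝ) (ha : 1 < a) (hab : a ≤ b) (hb : b ≤ 2)
    (α : ℝ → ℝ) (hαm : Measurable α) (hα : ∀ x, α x ∈ Set.Icc a b)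
    (f : ℝ → ℝ → ℝ) (hf : ∀ t, MemFalpha α (f t))
    (Y : ℝ → Ω → ℝ) (hYm : ∀ t, Measurable (Y t))
    (hCF : ∀ (d : ℕ) (t θ : Fin d → ℝ),
      ∫ ω, Complex.exp (Complex.I * ((∑ j, θ j * Y (t j) ω : ℝ) : ℂ)) ∂P =
        ((Real.exp (-(∫ x : ℝ, |∑ j, θ j * f (t j) x| ^ α x)) : ℝ) : ℂ))
    (η : ℝ)
    (hHol : ∀ T > (0:ℝ), ∃ c > (0:ℝ), ∀ t ∈ Set.Icc (-T) T, ∀ v ∈ Set.Icc (-T) T,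
      alphaNorm α (fun x => f t x - f v x) ≤ c * |t - v| ^ η) (T : ℝ) (hT : 0 < T) :
    ∃ K > (0:ℝ), ∀ t ∈ Set.Icc (-T) T, ∀ v ∈ Set.Icc (-T) T, ∀ r > (0:ℝ),
      P.real {ω | r < |Y t ω - Y v ω|} ≤ K * (|t - v| ^ η / r) ^ a := by
  obtain ⟨c, hc, hH⟩ := hHol T hT
  refine ⟨8 * (2 * c) ^ a, by positivity, fun t ht v hv r hr => ?_⟩
  rcases eq_or_ne t v with rfl | htv
  · have : {ω | r < |Y t ω - Y t ω|} = ∅ := by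
      ext ω; simp [hr.le]
    rw [this]
    simp only [measureReal_empty]
    positivity
  have hd : 0 < |t - v| ^ η := Real.rpow_pos_of_pos (abs_pos.2 (sub_ne_zero.2 htv)) _
  set g : ℝ → ℝ := fun x => f t x - f v x with hg
  have hgm : Measurable g := (hf t).1.sub (hf v).1
  have hgi : Integrable (fun x => |g x| ^ α x) :=
    integrable_modular_sub ha hb hαm hα (hf t).1 (hf v).1
      (memFalpha_integrable ha hb hαm hα (hf t)) (memFalpha_integrable ha hb hαm hα (hf v))
  have hcf : ∀ θ : ℝ, ∫ ω, Complex.exp (Complex.I * ((θ * (Y t ω - Y v ω) : ℝ) : ℂ)) ∂P =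
        ((Real.exp (-(∫ x : ℝ, |θ * g x| ^ α x)) : ℝ) : ℂ) := by
    intro θ
    have := hCF 2 ![t, v] ![θ, -θ]
    simp only [Fin.sum_univ_two, Matrix.cons_val_zero, Matrix.cons_val_one] at this
    simp only [hg, mul_sub]
    simpa only [neg_mul, ← sub_eq_add_neg] using this
  -- the factor `2` leaves room for a normaliser strictly above the infimum
  obtain ⟨l, hl, hlc, hl1⟩ : ∃ l > (0:ℝ), l ≤ 2 * c * |t - v| ^ η ∧
      (g =ᵐ[volume] 0 ∨ ∫ x : ℝ, |g x / l| ^ α x = 1) := by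
    by_cases h0 : g =ᵐ[volume] 0
    · exact ⟨2 * c * |t - v| ^ η, by positivity, le_rfl, Or.inl h0⟩
    · obtain ⟨l0, hl0, hl01⟩ := exists_normalizer ha hb hαm hα hgm hgi h0
      have hlt : sInf {lam : ℝ | 0 < lam ∧ ∫ x : ℝ, |g x / lam| ^ α x = 1} <
          2 * c * |t - v| ^ η := by
        have h1 : sInf {lam : ℝ | 0 < lam ∧ ∫ x : ℝ, |g x / lam| ^ α x = 1} ≤
          c * |t - v| ^ η := hH t ht v hv
        have h2 : 0 < c * |t - v| ^ η := by positivity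
        linarith
      obtain ⟨l, ⟨hl, hl1⟩, hll⟩ := exists_lt_of_csInf_lt
        (s := {lam : ℝ | 0 < lam ∧ ∫ x : ℝ, |g x / lam| ^ α x = 1}) ⟨l0, hl0, hl01⟩ hlt
      exact ⟨l, hl, hll.le, Or.inr hl1⟩
  calc P.real {ω | r < |Y t ω - Y v ω|} ≤ 8 * (l / r) ^ a :=
        increment_tail P ha (hab.trans hb) hα ((hYm t).sub (hYm v)) hcf hl hl1 hr
    _ ≤ 8 * ((2 * c * |t - v| ^ η) / r) ^ a := by gcongr
    _ = 8 * (2 * c) ^ a * (|t - v| ^ η / r) ^ a := by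
        rw [mul_div_assoc, Real.mul_rpow (by positivity) (by positivity), mul_assoc]

/-! ### Deterministic dyadic chaining -/

/-- The left endpoint `⌊2 ^ n t⌋ / 2 ^ n` of the dyadic interval of level `n` containing `t`. -/
def dyadicFloor (n : ℕ) (t : ℝ) : ℝ := (⌊2 ^ n * t⌋ : ℝ) / 2 ^ n

/-- For all large `n`, the increments of `y` over the level-`n` dyadic intervals starting
in `[-M, M]` are at most `2 ^ (-β n)`. -/
def GoodDyadic (β : ℝ) (M : ℕ) (y : ℝ → ℝ) : Prop :=
  ∀ᶠ n : ℕ in atTop, ∀ k ∈ Finset.Icc (-(M * 2 ^ n : ℤ)) (M * 2 ^ n : ℤ),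
    |y ((k + 1 : ℝ) / 2 ^ n) - y ((k : ℝ) / 2 ^ n)| ≤ ((2:ℝ) ^ (-β)) ^ n

/-- The limit of `y` along dyadic approximations from the left
(a junk value when the limit does not exist). -/
def dyadicLim (y : ℝ → ℝ) (t : ℝ) : ℝ := limUnder atTop fun n => y (dyadicFloor n t)

lemma dyadicFloor_le (n : ℕ) (t : ℝ) : dyadicFloor n t ≤ t := by
  rw [dyadicFloor, div_le_iff₀ (by positivity), mul_comm]
  exact Int.floor_le _

lemma sub_dyadicFloor_le (n : ℕ) (t : ℝ) : t - dyadicFloor n t ≤ (1 / 2) ^ n := by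
  have h := (Int.lt_floor_add_one (2 ^ n * t)).le
  have h2 : (0:ℝ) < 2 ^ n := by positivity
  rw [dyadicFloor, one_div, inv_pow, ← sub_nonneg]
  have : (2 ^ n : ℝ)⁻¹ - (t - (⌊2 ^ n * t⌋ : ℝ) / 2 ^ n) =
      ((⌊2 ^ n * t⌋ : ℝ) + 1 - 2 ^ n * t) / 2 ^ n := by field_simp; ring
  rw [this]
  exact div_nonneg (by linarith) h2.le

lemma floor_mem {M : ℕ} {t : ℝ} (ht : t ∈ Set.Icc (-(M:ℝ)) M) (n : ℕ) :
    ⌊2 ^ n * t⌋ ∈ Finset.Icc (-(M * 2 ^ n : ℤ)) (M * 2 ^ n : ℤ) := by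
  have h2 : (0:ℝ) < 2 ^ n := by positivity
  rw [Finset.mem_Icc]
  constructor
  · rw [Int.le_floor]
    push_cast
    nlinarith [ht.1]
  · have : (⌊2 ^ n * t⌋ : ℝ) ≤ M * 2 ^ n := (Int.floor_le _).trans (by nlinarith [ht.2])
    exact_mod_cast this

lemma floor_adjacent {x y : ℝ} (hxy : x ≤ y) (h : y ≤ x + 1) : ⌊y⌋ = ⌊x⌋ ∨ ⌊y⌋ = ⌊x⌋ + 1 := by
  have h1 : ⌊x⌋ ≤ ⌊y⌋ := Int.floor_le_floor hxy
  have h2 : ⌊y⌋ ≤ ⌊x⌋ + 1 := by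
    rw [← Int.floor_add_one]
    exact Int.floor_le_floor h
  omega

lemma floor_two_mul (x : ℝ) : ⌊2 * x⌋ = 2 * ⌊x⌋ ∨ ⌊2 * x⌋ = 2 * ⌊x⌋ + 1 := by
  have h1 : 2 * ⌊x⌋ ≤ ⌊2 * x⌋ := by
    rw [Int.le_floor]; push_cast; linarith [Int.floor_le x]
  have h2 : ⌊2 * x⌋ < 2 * ⌊x⌋ + 2 := by
    rw [Int.floor_lt]; push_cast; linarith [Int.lt_floor_add_one x]
  omega

lemma two_rpow_neg_lt_one {β : ℝ} (hβ : 0 < β) : (2:ℝ) ^ (-β) < 1 :=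
  Real.rpow_lt_one_of_one_lt_of_neg (by norm_num) (by linarith)

/-- Along a good path the dyadic approximations converge geometrically, uniformly on `[-M, M]`. -/
lemma chain_bound {β : ℝ} (hβ : 0 < β) {M N : ℕ} {y : ℝ → ℝ}
    (hN : ∀ n ≥ N, ∀ k ∈ Finset.Icc (-(M * 2 ^ n : ℤ)) (M * 2 ^ n : ℤ),
      |y ((k + 1 : ℝ) / 2 ^ n) - y ((k : ℝ) / 2 ^ n)| ≤ ((2:ℝ) ^ (-β)) ^ n)
    {t : ℝ} (ht : t ∈ Set.Icc (-(M:ℝ)) M) :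
    Tendsto (fun n => y (dyadicFloor n t)) atTop (𝓝 (dyadicLim y t)) ∧
    ∀ n ≥ N, |y (dyadicFloor n t) - dyadicLim y t| ≤
      ((2:ℝ) ^ (-β)) ^ n / (1 - (2:ℝ) ^ (-β)) := by
  set ρ : ℝ := (2:ℝ) ^ (-β) with hρ
  have hρ0 : 0 < ρ := by positivity
  have hρ1 : ρ < 1 := two_rpow_neg_lt_one hβ
  have hstep : ∀ n ≥ N, |y (dyadicFloor n t) - y (dyadicFloor (n + 1) t)| ≤ ρ ^ n := by
    intro n hn
    have hk := floor_mem ht n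
    have e1 : dyadicFloor n t = ((2 * ⌊2 ^ n * t⌋ : ℤ) : ℝ) / 2 ^ (n + 1) := by
      rw [dyadicFloor, pow_succ]; push_cast; field_simp
    have e2 : (2:ℝ) ^ (n + 1) * t = 2 * (2 ^ n * t) := by ring
    rcases floor_two_mul (2 ^ n * t) with h | h
    · have : dyadicFloor (n + 1) t = dyadicFloor n t := by
        rw [e1, dyadicFloor, e2, h]
      rw [this, sub_self, abs_zero]
      positivity
    · have e3 : dyadicFloor (n + 1) t = (((2 * ⌊2 ^ n * t⌋ : ℤ) : ℝ) + 1) / 2 ^ (n + 1) := by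
        rw [dyadicFloor, e2, h]; push_cast; rfl
      rw [e1, e3, abs_sub_comm]
      refine (hN (n + 1) (by omega) _ ?_).trans
        (pow_le_pow_of_le_one hρ0.le hρ1.le (Nat.le_succ n))
      rw [Finset.mem_Icc] at hk ⊢
      rw [pow_succ]
      constructor <;> nlinarith [hk.1, hk.2]
  have hgeo : ∀ m ≥ N, ∀ n, dist (y (dyadicFloor (n + m) t)) (y (dyadicFloor (n + 1 + m) t)) ≤
      ρ ^ m * ρ ^ n := by
    intro m hm n
    rw [Real.dist_eq, ← pow_add, add_comm m n, show n + 1 + m = n + m + 1 by ring]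
    exact hstep (n + m) (by omega)
  have hlim : Tendsto (fun n => y (dyadicFloor n t)) atTop (𝓝 (dyadicLim y t)) := by
    refine tendsto_nhds_limUnder ?_
    obtain ⟨L, hL⟩ := cauchySeq_tendsto_of_complete
      (cauchySeq_of_le_geometric ρ (ρ ^ N) hρ1 (hgeo N le_rfl))
    exact ⟨L, (tendsto_add_atTop_iff_nat N).1 hL⟩
  refine ⟨hlim, fun n hn => ?_⟩
  have := dist_le_of_le_geometric_of_tendsto ρ (ρ ^ n) hρ1 (hgeo n hn)
    ((tendsto_add_atTop_iff_nat n).2 hlim) 0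
  simpa [Real.dist_eq] using this

lemma GoodDyadic.tendsto {β : ℝ} (hβ : 0 < β) {M : ℕ} {y : ℝ → ℝ} (h : GoodDyadic β M y)
    {t : ℝ} (ht : t ∈ Set.Icc (-(M:ℝ)) M) :
    Tendsto (fun n => y (dyadicFloor n t)) atTop (𝓝 (dyadicLim y t)) := by
  obtain ⟨N, hN⟩ := eventually_atTop.1 h
  exact (chain_bound hβ hN ht).1

lemma half_pow_rpow (β : ℝ) (n : ℕ) : ((1 / 2 : ℝ) ^ n) ^ β = ((2:ℝ) ^ (-β)) ^ n := by
  rw [← Real.rpow_natCast, ← Real.rpow_natCast, ← Real.rpow_mul (by norm_num),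
    ← Real.rpow_mul (by norm_num), one_div, Real.inv_rpow (by norm_num),
    ← Real.rpow_neg (by norm_num)]
  ring_nf

/-- The dyadic limit of a good path is `β`-Hölder on `[-M, M]`. -/
lemma GoodDyadic.holder {β : ℝ} (hβ : 0 < β) {M : ℕ} {y : ℝ → ℝ} (h : GoodDyadic β M y) :
    ∃ C : ℝ, ∀ t ∈ Set.Icc (-(M:ℝ)) M, ∀ v ∈ Set.Icc (-(M:ℝ)) M,
      |dyadicLim y t - dyadicLim y v| ≤ C * |t - v| ^ β := by
  obtain ⟨N, hN⟩ := eventually_atTop.1 h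
  set ρ : ℝ := (2:ℝ) ^ (-β) with hρ
  have hρ0 : 0 < ρ := by positivity
  have hρ1 : ρ < 1 := two_rpow_neg_lt_one hβ
  have hρ2 : 0 < 1 - ρ := by linarith
  -- `t ↦ y (dyadicFloor N t)` takes finitely many values on `[-M, M]`
  obtain ⟨B, hB⟩ : ∃ B : ℝ, ∀ t ∈ Set.Icc (-(M:ℝ)) M, |y (dyadicFloor N t)| ≤ B := by
    obtain ⟨B, hB⟩ := ((Finset.Icc (-(M * 2 ^ N : ℤ)) (M * 2 ^ N : ℤ)).image
      fun k : ℤ => |y ((k : ℝ) / 2 ^ N)|).bddAbove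
    exact ⟨B, fun t ht => hB (by
      rw [Finset.coe_image]
      exact ⟨_, Finset.mem_coe.2 (floor_mem ht N), rfl⟩)⟩
  set D : ℝ := 2 / (1 - ρ) + 1 with hD
  have hD0 : 0 < D := by positivity
  have key : ∀ n ≥ N, ∀ t ∈ Set.Icc (-(M:ℝ)) M, ∀ v ∈ Set.Icc (-(M:ℝ)) M,
      |dyadicLim y t - dyadicLim y v| ≤
        2 * (ρ ^ n / (1 - ρ)) + |y (dyadicFloor n v) - y (dyadicFloor n t)| := by
    intro n hn t ht v hv
    have h1 := abs_le.1 ((chain_bound hβ hN ht).2 n hn)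
    have h2 := abs_le.1 ((chain_bound hβ hN hv).2 n hn)
    rw [← hρ] at h1 h2
    have h3 := neg_abs_le (y (dyadicFloor n v) - y (dyadicFloor n t))
    have h4 := le_abs_self (y (dyadicFloor n v) - y (dyadicFloor n t))
    rw [abs_le]
    constructor <;> linarith [h1.1, h1.2, h2.1, h2.2]
  set C : ℝ := max (D / ρ) ((2 * (ρ ^ N / (1 - ρ)) + 2 * B) / ρ ^ N) with hC
  have main : ∀ t ∈ Set.Icc (-(M:ℝ)) M, ∀ v ∈ Set.Icc (-(M:ℝ)) M, t < v →
      |dyadicLim y t - dyadicLim y v| ≤ C * |t - v| ^ β := by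
    intro t ht v hv htv
    have hpos : 0 < v - t := by linarith
    have habs : |t - v| = v - t := by rw [abs_sub_comm, abs_of_pos hpos]
    rw [habs]
    by_cases hsmall : v - t ≤ (1 / 2) ^ N
    · have hhalf : (0:ℝ) < (1 / 2) ^ N := by positivity
      obtain ⟨m, hm1, hm2⟩ := exists_nat_pow_near_of_lt_one
        (x := (v - t) / (1 / 2) ^ N) (y := (1 / 2 : ℝ)) (by positivity)
        ((div_le_one hhalf).2 hsmall) (by norm_num) (by norm_num)
      rw [lt_div_iff₀ hhalf, ← pow_add] at hm1
      rw [div_le_iff₀ hhalf, ← pow_add] at hm2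
      set n := m + N with hn
      have hk := floor_mem ht n
      have h2n : (0:ℝ) < 2 ^ n := by positivity
      have hle : 2 ^ n * v ≤ 2 ^ n * t + 1 := by
        have : 2 ^ n * (v - t) ≤ 2 ^ n * (1 / 2 : ℝ) ^ n := by gcongr
        rw [← mul_pow] at this
        norm_num at this
        linarith
      have hinc : |y (dyadicFloor n v) - y (dyadicFloor n t)| ≤ ρ ^ n := by
        rcases floor_adjacent (by gcongr : (2:ℝ) ^ n * t ≤ 2 ^ n * v) hle with h | h
        · rw [dyadicFloor, dyadicFloor, h, sub_self, abs_zero]; positivity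
        · rw [dyadicFloor, dyadicFloor, h]
          push_cast
          exact hN n (by omega) _ hk
      have hρn : ρ ^ (n + 1) ≤ (v - t) ^ β := by
        rw [hρ, ← half_pow_rpow]
        refine Real.rpow_le_rpow (by positivity) ?_ hβ.le
        rw [show n + 1 = m + 1 + N by omega]
        exact hm1.le
      calc |dyadicLim y t - dyadicLim y v| ≤ 2 * (ρ ^ n / (1 - ρ)) + ρ ^ n :=
            (key n (by omega) t ht v hv).trans (by gcongr)
        _ = D / ρ * ρ ^ (n + 1) := by rw [hD, pow_succ]; field_simp
        _ ≤ C * (v - t) ^ β := by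
            gcongr
            exact le_max_left _ _
    · have h1 := key N le_rfl t ht v hv
      have h2 : |y (dyadicFloor N v) - y (dyadicFloor N t)| ≤ 2 * B :=
        (abs_sub _ _).trans (by linarith [hB t ht, hB v hv])
      have hB0 : 0 ≤ B := (abs_nonneg _).trans (hB t ht)
      have h3 : ρ ^ N ≤ (v - t) ^ β := by
        rw [hρ, ← half_pow_rpow]
        exact Real.rpow_le_rpow (by positivity) (not_le.1 hsmall).le hβ.le
      calc |dyadicLim y t - dyadicLim y v| ≤ 2 * (ρ ^ N / (1 - ρ)) + 2 * B := by linarith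
        _ = (2 * (ρ ^ N / (1 - ρ)) + 2 * B) / ρ ^ N * ρ ^ N := by field_simp
        _ ≤ C * (v - t) ^ β := by
            gcongr
            exact le_max_right _ _
  refine ⟨C, fun t ht v hv => ?_⟩
  rcases lt_trichotomy t v with h | rfl | h
  · exact main t ht v hv h
  · simp [Real.zero_rpow hβ.ne']
  · rw [abs_sub_comm, abs_sub_comm t v]
    exact main v hv t ht h

lemma continuous_of_local_holder {β : ℝ} (hβ : 0 < β) {z : ℝ → ℝ}
    (h : ∀ M : ℕ, ∃ C : ℝ, ∀ t ∈ Set.Icc (-(M:ℝ)) M, ∀ v ∈ Set.Icc (-(M:ℝ)) M,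
      |z t - z v| ≤ C * |t - v| ^ β) : Continuous z := by
  rw [continuous_iff_continuousAt]
  intro t
  obtain ⟨M, hM⟩ := exists_nat_gt |t|
  obtain ⟨C, hC⟩ := h M
  have ht := abs_lt.1 hM
  rw [ContinuousAt, tendsto_iff_dist_tendsto_zero]
  have hz : Tendsto (fun v : ℝ => C * |v - t| ^ β) (𝓝 t) (𝓝 0) := by
    have : Continuous fun v : ℝ => C * |v - t| ^ β :=
      continuous_const.mul (Continuous.rpow_const (by fun_prop) fun _ => Or.inr hβ.le)
    simpa [Real.zero_rpow hβ.ne'] using this.tendsto t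
  refine squeeze_zero' (Eventually.of_forall fun _ => dist_nonneg) ?_ hz
  filter_upwards [Icc_mem_nhds ht.1 ht.2] with v hv
  rw [Real.dist_eq]
  exact hC v hv t ⟨ht.1.le, ht.2.le⟩

/-! ### Borel–Cantelli -/

/-- `2 ^ n` increments times the probability of a single exceedance decays geometrically exactly
when `1 - (η - β) a < 0`. -/
lemma ratio_lt_one {a η β : ℝ} (ha : 1 < a) (hβ : β < (η * a - 1) / a) :
    2 * ((2:ℝ) ^ (-η) / (2:ℝ) ^ (-β)) ^ a < 1 := by
  rw [lt_div_iff₀ (by linarith)] at hβ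
  rw [← Real.rpow_sub (by norm_num), ← Real.rpow_mul (by norm_num)]
  calc (2:ℝ) * 2 ^ ((-η - -β) * a) = 2 ^ (1 + (-η - -β) * a) := by
        rw [Real.rpow_add (by norm_num), Real.rpow_one]
    _ < 1 := Real.rpow_lt_one_of_one_lt_of_neg (by norm_num) (by nlinarith)

lemma ratio_pow (a p q : ℝ) (hp : 0 < p) (hq : 0 < q) (n : ℕ) :
    (p ^ n / q ^ n) ^ a = ((p / q) ^ a) ^ n := by
  rw [← div_pow, ← Real.rpow_natCast, ← Real.rpow_natCast, ← Real.rpow_mul (by positivity),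
    ← Real.rpow_mul (by positivity), mul_comm]

lemma tsum_ofReal_geometric_ne_top {K q : ℝ} (hK : 0 ≤ K) (hq0 : 0 ≤ q) (hq : q < 1) :
    ∑' n : ℕ, ENNReal.ofReal (K * q ^ n) ≠ ⊤ := by
  rw [← ENNReal.ofReal_tsum_of_nonneg (fun n => by positivity)
    ((summable_geometric_of_lt_one hq0 hq).mul_left K)]
  exact ENNReal.ofReal_ne_top

/-- A union bound over the roughly `2 M · 2 ^ n` dyadic increments of level `n`, summed in `n`;
the tail bound is needed on `[-M - 1, M + 1]` because the last increments may leave `[-M, M]`. -/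
lemma ae_goodDyadic {Ω : Type*} [MeasurableSpace Ω] (P : Measure Ω) [IsProbabilityMeasure P]
    {a η β : ℝ} (ha : 1 < a) (hβ : β < (η * a - 1) / a) {Y : ℝ → Ω → ℝ} (M : ℕ)
    (hT : ∃ K > (0:ℝ), ∀ t ∈ Set.Icc (-(M + 1 : ℝ)) (M + 1), ∀ v ∈ Set.Icc (-(M + 1 : ℝ)) (M + 1),
      ∀ r > (0:ℝ), P.real {ω | r < |Y t ω - Y v ω|} ≤ K * (|t - v| ^ η / r) ^ a) :
    ∀ᵐ ω ∂P, GoodDyadic β M (fun t => Y t ω) := by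
  obtain ⟨K, hK, hT⟩ := hT
  set q : ℝ := 2 * ((2:ℝ) ^ (-η) / (2:ℝ) ^ (-β)) ^ a with hq
  have hq1 : q < 1 := ratio_lt_one ha hβ
  set A : ℕ → Set Ω := fun n => ⋃ k ∈ Finset.Icc (-(M * 2 ^ n : ℤ)) (M * 2 ^ n : ℤ),
    {ω | ((2:ℝ) ^ (-β)) ^ n < |Y ((k + 1 : ℝ) / 2 ^ n) ω - Y ((k : ℝ) / 2 ^ n) ω|} with hA
  have hAn : ∀ n, P (A n) ≤ ENNReal.ofReal ((2 * M + 1) * K * q ^ n) := by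
    intro n
    have h2 : (1:ℝ) ≤ 2 ^ n := one_le_pow₀ (by norm_num)
    have h20 : (0:ℝ) < 2 ^ n := by positivity
    have hone : ∀ k ∈ Finset.Icc (-(M * 2 ^ n : ℤ)) (M * 2 ^ n : ℤ),
        P.real {ω | ((2:ℝ) ^ (-β)) ^ n < |Y ((k + 1 : ℝ) / 2 ^ n) ω - Y ((k : ℝ) / 2 ^ n) ω|} ≤
          K * (((2:ℝ) ^ (-η) / (2:ℝ) ^ (-β)) ^ a) ^ n := by
      intro k hk
      rw [Finset.mem_Icc] at hk
      have hk1 : -(M * 2 ^ n : ℝ) ≤ k := by exact_mod_cast hk.1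
      have hk2 : (k:ℝ) ≤ M * 2 ^ n := by exact_mod_cast hk.2
      have hmem1 : (k:ℝ) / 2 ^ n ∈ Set.Icc (-(M + 1 : ℝ)) (M + 1) := by
        constructor
        · rw [le_div_iff₀ h20]; nlinarith
        · rw [div_le_iff₀ h20]; nlinarith
      have hmem2 : ((k:ℝ) + 1) / 2 ^ n ∈ Set.Icc (-(M + 1 : ℝ)) (M + 1) := by
        constructor
        · rw [le_div_iff₀ h20]; nlinarith
        · rw [div_le_iff₀ h20]; nlinarith
      have h := hT _ hmem2 _ hmem1 (((2:ℝ) ^ (-β)) ^ n) (by positivity)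
      have e : |((k:ℝ) + 1) / 2 ^ n - (k:ℝ) / 2 ^ n| ^ η = ((2:ℝ) ^ (-η)) ^ n := by
        rw [← half_pow_rpow, ← sub_div, add_sub_cancel_left, abs_of_pos (by positivity),
          one_div_pow]
      rwa [e, ratio_pow a _ _ (by positivity) (by positivity)] at h
    have hreal : P.real (A n) ≤ (2 * M + 1) * K * q ^ n := by
      calc P.real (A n) ≤ ∑ k ∈ Finset.Icc (-(M * 2 ^ n : ℤ)) (M * 2 ^ n : ℤ),
            P.real {ω | ((2:ℝ) ^ (-β)) ^ n <
              |Y ((k + 1 : ℝ) / 2 ^ n) ω - Y ((k : ℝ) / 2 ^ n) ω|} :=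
            measureReal_biUnion_finset_le _ _
        _ ≤ ∑ k ∈ Finset.Icc (-(M * 2 ^ n : ℤ)) (M * 2 ^ n : ℤ),
              K * (((2:ℝ) ^ (-η) / (2:ℝ) ^ (-β)) ^ a) ^ n := Finset.sum_le_sum hone
        _ = (2 * (M * 2 ^ n) + 1) * (K * (((2:ℝ) ^ (-η) / (2:ℝ) ^ (-β)) ^ a) ^ n) := by
            rw [Finset.sum_const, Int.card_Icc, nsmul_eq_mul]
            congr 1
            have : ((M * 2 ^ n + 1 - -(M * 2 ^ n) : ℤ)).toNat = 2 * (M * 2 ^ n) + 1 := by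
              have e : (M * 2 ^ n + 1 - -(M * 2 ^ n) : ℤ) = ((2 * (M * 2 ^ n) + 1 : ℕ) : ℤ) := by
                push_cast; ring
              rw [e, Int.toNat_natCast]
            rw [this]; push_cast; rfl
        _ ≤ ((2 * M + 1) * 2 ^ n) * (K * (((2:ℝ) ^ (-η) / (2:ℝ) ^ (-β)) ^ a) ^ n) := by
            gcongr
            nlinarith
        _ = (2 * M + 1) * K * q ^ n := by rw [hq, mul_pow]; ring
    rw [← ENNReal.ofReal_toReal (measure_ne_top P (A n))]
    exact ENNReal.ofReal_le_ofReal hreal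
  have hsum : ∑' n, P (A n) ≠ ⊤ :=
    ne_top_of_le_ne_top (tsum_ofReal_geometric_ne_top (by positivity) (by positivity) hq1)
      (ENNReal.tsum_le_tsum hAn)
  filter_upwards [ae_eventually_notMem hsum] with ω hω
  filter_upwards [hω] with n hn k hk
  by_contra hcon
  exact hn (Set.mem_biUnion (show k ∈ (Finset.Icc (-(M * 2 ^ n : ℤ)) (M * 2 ^ n : ℤ)) from hk)
    (not_le.1 hcon))

lemma ae_tendsto_dyadic {Ω : Type*} [MeasurableSpace Ω] (P : Measure Ω) [IsProbabilityMeasure P]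
    {a η β : ℝ} (ha : 1 < a) (hβ0 : 0 < β) (hβ : β < (η * a - 1) / a) {Y : ℝ → Ω → ℝ} {t T : ℝ}
    (ht : |t| + 1 ≤ T)
    (hT : ∃ K > (0:ℝ), ∀ t ∈ Set.Icc (-T) T, ∀ v ∈ Set.Icc (-T) T,
      ∀ r > (0:ℝ), P.real {ω | r < |Y t ω - Y v ω|} ≤ K * (|t - v| ^ η / r) ^ a) :
    ∀ᵐ ω ∂P, Tendsto (fun n => Y (dyadicFloor n t) ω) atTop (𝓝 (Y t ω)) := by
  obtain ⟨K, hK, hT⟩ := hT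
  have hη : 0 < η := by
    rw [lt_div_iff₀ (by linarith)] at hβ
    by_contra h
    nlinarith
  set p : ℝ := ((2:ℝ) ^ (-η) / (2:ℝ) ^ (-β)) ^ a with hp
  have hp0 : 0 < p := by positivity
  have hp1 : p < 1 := by have := ratio_lt_one ha hβ; linarith
  set A : ℕ → Set Ω := fun n => {ω | ((2:ℝ) ^ (-β)) ^ n < |Y (dyadicFloor n t) ω - Y t ω|} with hA
  have hAn : ∀ n, P (A n) ≤ ENNReal.ofReal (K * p ^ n) := by
    intro n
    have h1 := dyadicFloor_le n t
    have h2 := sub_dyadicFloor_le n t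
    have h3 : (1 / 2 : ℝ) ^ n ≤ 1 := pow_le_one₀ (by norm_num) (by norm_num)
    have htt := abs_le.1 (le_refl |t|)
    have h := hT (dyadicFloor n t) ⟨by linarith, by linarith⟩ t ⟨by linarith, by linarith⟩
      (((2:ℝ) ^ (-β)) ^ n) (by positivity)
    have e : |dyadicFloor n t - t| ^ η ≤ ((2:ℝ) ^ (-η)) ^ n := by
      rw [← half_pow_rpow, abs_sub_comm, abs_of_nonneg (by linarith)]
      exact Real.rpow_le_rpow (by linarith) h2 hη.le
    have hreal : P.real (A n) ≤ K * p ^ n := by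
      refine h.trans ?_
      rw [hp, ← ratio_pow a _ _ (by positivity) (by positivity)]
      gcongr
    rw [← ENNReal.ofReal_toReal (measure_ne_top P (A n))]
    exact ENNReal.ofReal_le_ofReal hreal
  have hsum : ∑' n, P (A n) ≠ ⊤ :=
    ne_top_of_le_ne_top (tsum_ofReal_geometric_ne_top hK.le hp0.le hp1)
      (ENNReal.tsum_le_tsum hAn)
  filter_upwards [ae_eventually_notMem hsum] with ω hω
  rw [tendsto_iff_dist_tendsto_zero]
  refine squeeze_zero' (Eventually.of_forall fun _ => dist_nonneg) ?_
    (tendsto_pow_atTop_nhds_zero_of_lt_one (r := (2:ℝ) ^ (-β)) (by positivity)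
      (two_rpow_neg_lt_one hβ0))
  filter_upwards [hω] with n hn
  rw [Real.dist_eq]
  exact not_lt.1 hn

/-! ### The continuous version -/

/-- a multistable integral process `Y(t) = ∫ f(t,x) dM_α(x)` with
`‖f(t,·) − f(u,·)‖_α ≤ c|t−u|^η` on bounded intervals has a continuous version
satisfying an a.s. β-Hölder condition on bounded intervals for all
`0 < β < (ηa − 1)/a`. -/
theorem multistable_process_continuous_version {Ω : Type*} [MeasurableSpace Ω]
    (P : Measure Ω) [IsProbabilityMeasure P]
    (a b : ℝ) (ha : 1 < a) (hab : a ≤ b) (hb : b ≤ 2)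
    (α : ℝ → ℝ) (hαm : Measurable α) (hα : ∀ x, α x ∈ Set.Icc a b)
    (f : ℝ → ℝ → ℝ) (hf : ∀ t, MemFalpha α (f t))
    (Y : ℝ → Ω → ℝ) (hYm : ∀ t, Measurable (Y t))
    (hCF : ∀ (d : ℕ) (t θ : Fin d → ℝ),
      ∫ ω, Complex.exp (Complex.I * ((∑ j, θ j * Y (t j) ω : ℝ) : ℂ)) ∂P =
        ((Real.exp (-(∫ x : ℝ, |∑ j, θ j * f (t j) x| ^ α x)) : ℝ) : ℂ))
    (η : ℝ) (hη1 : 1 / a < η) (hη2 : η < 1)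
    (hHol : ∀ T > (0:ℝ), ∃ c > (0:ℝ), ∀ t ∈ Set.Icc (-T) T, ∀ v ∈ Set.Icc (-T) T,
      alphaNorm α (fun x => f t x - f v x) ≤ c * |t - v| ^ η) :
    ∃ Z : ℝ → Ω → ℝ,
      (∀ t, Y t =ᵐ[P] Z t) ∧
      (∀ ω, Continuous fun t => Z t ω) ∧
      (∀ β, 0 < β → β < (η * a - 1) / a → ∀ T > (0:ℝ),
        ∀ᵐ ω ∂P, ∃ C : ℝ, ∀ t ∈ Set.Icc (-T) T, ∀ v ∈ Set.Icc (-T) T,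
          |Z t ω - Z v ω| ≤ C * |t - v| ^ β) := by
  have htail := process_tail P a b ha hab hb α hαm hα f hf Y hYm hCF η hHol
  set γ : ℝ := (η * a - 1) / a with hγ
  have hγ0 : 0 < γ := by
    rw [div_lt_iff₀ (by linarith)] at hη1
    exact div_pos (by linarith) (by linarith)
  have hgood : ∀ β, β < γ → ∀ M : ℕ, ∀ᵐ ω ∂P, GoodDyadic β M (fun t => Y t ω) :=
    fun β hβ M => ae_goodDyadic P ha hβ M (htail (M + 1) (by positivity))
  -- any exponent in `(0, γ)` serves to define the version; the Hölder exponents are handled later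
  set β₀ : ℝ := γ / 2 with hβ₀
  have hβ₀0 : 0 < β₀ := by linarith
  have hβ₀γ : β₀ < γ := by linarith
  have hall : ∀ᵐ ω ∂P, ∀ M : ℕ, GoodDyadic β₀ M (fun t => Y t ω) :=
    ae_all_iff.2 (hgood β₀ hβ₀γ)
  classical
  refine ⟨fun t ω => if ∀ M : ℕ, GoodDyadic β₀ M (fun t => Y t ω) then
    dyadicLim (fun t => Y t ω) t else 0, fun t => ?_, fun ω => ?_, fun β hβ0 hβ T hT => ?_⟩
  · obtain ⟨M, hM⟩ := exists_nat_ge |t|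
    filter_upwards [hall, ae_tendsto_dyadic P ha hβ₀0 hβ₀γ (Y := Y) (le_refl (|t| + 1))
      (htail _ (by positivity))] with ω hω hlim
    rw [if_pos hω]
    exact tendsto_nhds_unique hlim ((hω M).tendsto hβ₀0 (abs_le.1 hM))
  · by_cases hω : ∀ M : ℕ, GoodDyadic β₀ M (fun t => Y t ω)
    · simp only [if_pos hω]
      exact continuous_of_local_holder hβ₀0 fun M => (hω M).holder hβ₀0
    · simp only [if_neg hω]
      exact continuous_const
  · obtain ⟨M, hM⟩ := exists_nat_ge T
    filter_upwards [hall, hgood β hβ M] with ω hω hωβ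
    obtain ⟨C, hC⟩ := hωβ.holder hβ0
    refine ⟨C, fun t ht v hv => ?_⟩
    simp only [if_pos hω]
    exact hC t ⟨by linarith [ht.1], by linarith [ht.2]⟩ v ⟨by linarith [hv.1], by linarith [hv.2]⟩
end
end

section
/- Let 0 < a ≤ b ≤ 2, let α : ℝ → [a,b] be continuous, let u ∈ ℝ and h₀ > 0. Let f : ℝ × ℝ → ℝ with f(t,·) ∈ F_{a,b} for all t, and let k : ℝ × ℝ → ℝ be jointly measurable with k(t,·) ∈ F_{a,b} for all t, such that for every t ∈ ℝ, lim_{r→0⁺} ∫_ℝ | (f(u+rt, u+rz) − f(u, u+rz)) / r^{h₀ − 1/α(u+rz)} − k(t,z) |^{a,b} dz = 0. For each m ∈ ℕ, t₁,…,t_m ∈ ℝ and r > 0, let ν_r be the probability measure on ℝ^m with characteristic function θ ↦ exp(−∫_ℝ |Σ_{j=1}^m θ_j r^{−h₀} (f(u+rt_j, x) − f(u, x))|^{α(x)} dx), and let ν₀ be the probability measure on ℝ^m with characteristic function θ ↦ exp(−∫_ℝ |Σ_{j=1}^m θ_j k(t_j, z)|^{α(u)} dz). Then ν_r converges weakly to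 ν₀ as r → 0⁺; that is, the process Y(t) = ∫ f(t,x) dM_α(x) is h₀-localisable at u with local form Y'_u(t) = ∫ k(t,z) dM_{α(u)}(z). -/
/-!
By Lévy's continuity theorem it is enough to prove pointwise convergence of the characteristic
functions, hence of the exponents. The substitution `x = u + r z` turns the exponent of `ν r` at
`θ` into `∫ |G_r(z)| ^ α (u + r z) dz`, where `G_r` is the `θ`-combination of the rescaled kernels
`(f (u + r t_j) (u + r z) - f u (u + r z)) / r ^ (h₀ - 1 / α (u + r z))`: the Jacobian `r` is
absorbed as `(r ^ (1 / α)) ^ α`. With `K` the same combination of the `k t_j`, the hypothesis says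
that `∫ |G_r - K|^{a,b} → 0`.

Two facts finish the argument (`tendsto_integral_rpow`). The elementary inequality
`||x + y|^p - |x|^p| ≤ ε |x|^p + C_ε |y|^p`, uniform in `p ∈ [a, b]` (`abs_rpow_add_sub_le`),
allows `G_r` to be replaced by `K` in the exponent. Dominated convergence with majorant `|K|^{a,b}`
then allows the variable exponent `α (u + r z)` to be replaced by its limit `α u`.
The integral in the hypothesis is genuinely convergent for `0 < r < 1` because the rescaling
factor is then bounded (`integrable_pab_rescaled`).
-/

open MeasureTheory Filter Set Topology ProbabilityTheory BoundedContinuousFunction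

noncomputable section

/-! ### The gauge `|s|^{a,b}` -/

section Gauge

variable {a b : ℝ}

lemma pab_nonneg (s : ℝ) : 0 ≤ pab a b s :=
  le_max_of_le_left (Real.rpow_nonneg (abs_nonneg s) a)

lemma pab_zero (ha : 0 < a) (hab : a ≤ b) : pab a b 0 = 0 := by
  simp [pab, Real.zero_rpow ha.ne', Real.zero_rpow (ha.trans_le hab).ne']

lemma pab_mono (ha : 0 < a) (hab : a ≤ b) {s t : ℝ} (h : |s| ≤ |t|) : pab a b s ≤ pab a b t :=
  max_le_max (Real.rpow_le_rpow (abs_nonneg s) h ha.le)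
    (Real.rpow_le_rpow (abs_nonneg s) h (ha.le.trans hab))

lemma pab_mul_le (s t : ℝ) : pab a b (s * t) ≤ pab a b s * pab a b t := by
  have h : ∀ p : ℝ, |s * t| ^ p = |s| ^ p * |t| ^ p := fun p => by
    rw [abs_mul, Real.mul_rpow (abs_nonneg s) (abs_nonneg t)]
  refine max_le ?_ ?_
  · rw [h]
    exact mul_le_mul (le_max_left _ _) (le_max_left _ _) (Real.rpow_nonneg (abs_nonneg t) _)
      (pab_nonneg s)
  · rw [h]
    exact mul_le_mul (le_max_right _ _) (le_max_right _ _) (Real.rpow_nonneg (abs_nonneg t) _)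
      (pab_nonneg s)

lemma rpow_le_pab {p : ℝ} (hp : p ∈ Set.Icc a b) (s : ℝ) (ha : 0 < a) : |s| ^ p ≤ pab a b s := by
  rcases (abs_nonneg s).eq_or_lt with h0 | h0
  · rw [← h0, Real.zero_rpow (ha.trans_le hp.1).ne']
    exact pab_nonneg s
  · rcases le_total |s| 1 with h1 | h1
    · exact le_max_of_le_left (Real.rpow_le_rpow_of_exponent_ge h0 h1 hp.1)
    · exact le_max_of_le_right (Real.rpow_le_rpow_of_exponent_le h1 hp.2)

lemma measurable_pab : Measurable (pab a b) := by
  unfold pab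
  fun_prop

/-- A linear combination is dominated by the sum of the gauges of its entries, because it is at
most `∑ |c j|` times the largest entry. -/
lemma pab_sum_le (ha : 0 < a) (hab : a ≤ b) {ι : Type*} [Fintype ι] (c x : ι → ℝ) :
    pab a b (∑ j, c j * x j) ≤ pab a b (∑ j, |c j|) * ∑ j, pab a b (x j) := by
  rcases isEmpty_or_nonempty ι with hι | hι
  · simp [pab_zero ha hab]
  obtain ⟨i, -, hi⟩ := Finset.exists_max_image Finset.univ (fun j => |x j|) Finset.univ_nonempty
  have h1 : |∑ j, c j * x j| ≤ |(∑ j, |c j|) * x i| := by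
    rw [abs_mul, abs_of_nonneg (Finset.sum_nonneg fun j _ => abs_nonneg (c j)), Finset.sum_mul]
    refine (Finset.abs_sum_le_sum_abs _ _).trans (Finset.sum_le_sum fun j hj => ?_)
    rw [abs_mul]
    exact mul_le_mul_of_nonneg_left (hi j hj) (abs_nonneg _)
  refine (pab_mono ha hab h1).trans ((pab_mul_le _ _).trans ?_)
  exact mul_le_mul_of_nonneg_left
    (Finset.single_le_sum (f := fun j => pab a b (x j)) (fun j _ => pab_nonneg (x j))
      (Finset.mem_univ i)) (pab_nonneg _)

lemma pab_sub_le (ha : 0 < a) (hab : a ≤ b) (x y : ℝ) :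
    pab a b (x - y) ≤ pab a b 2 * (pab a b x + pab a b y) := by
  have h := pab_sum_le ha hab ![1, -1] ![x, y]
  simp only [Fin.sum_univ_two, Matrix.cons_val_zero, Matrix.cons_val_one, one_mul, neg_mul,
    abs_one, abs_neg] at h
  norm_num at h
  simpa [sub_eq_add_neg] using h

lemma integrable_pab_sum (ha : 0 < a) (hab : a ≤ b) {ι : Type*} [Fintype ι] (c : ι → ℝ)
    {g : ι → ℝ → ℝ} (hg : ∀ j, Measurable (g j))
    (hi : ∀ j, Integrable (fun z => pab a b (g j z))) :
    Integrable (fun z => pab a b (∑ j, c j * g j z)) := by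
  refine Integrable.mono' ((integrable_finsetSum Finset.univ fun j _ => hi j).const_mul
    (pab a b (∑ j, |c j|))) ?_ (ae_of_all _ fun z => ?_)
  · exact (measurable_pab.comp (by fun_prop)).aestronglyMeasurable
  · rw [Real.norm_of_nonneg (pab_nonneg _)]
    exact pab_sum_le ha hab c fun j => g j z

lemma integrable_rpow_of_pab (ha : 0 < a) {g β : ℝ → ℝ} (hg : Measurable g)
    (hi : Integrable (fun z => pab a b (g z))) (hβ : Measurable β)
    (hβI : ∀ z, β z ∈ Set.Icc a b) : Integrable (fun z => |g z| ^ β z) := by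
  refine hi.mono' (by fun_prop : Measurable fun z => |g z| ^ β z).aestronglyMeasurable
    (ae_of_all _ fun z => ?_)
  rw [Real.norm_of_nonneg (Real.rpow_nonneg (abs_nonneg _) _)]
  exact rpow_le_pab (hβI z) _ ha

end Gauge

/-! ### Convergence of the exponents -/

/-- A perturbation inequality for powers, uniform over exponents in `[a, b]`. For `|y| ≤ δ |x|`
the ratio `|x + y| / |x|` is within `δ` of `1`; otherwise every term is a multiple of `|y| ^ p`. -/
lemma abs_rpow_add_sub_le {a b : ℝ} (ha : 0 < a) (hab : a ≤ b) {ε : ℝ} (hε : 0 < ε) :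
    ∃ C : ℝ, 0 ≤ C ∧ ∀ p ∈ Set.Icc a b, ∀ x y : ℝ,
      |(|x + y| ^ p - |x| ^ p)| ≤ ε * |x| ^ p + C * |y| ^ p := by
  have hb : 0 < b := ha.trans_le hab
  have c1 : Tendsto (fun d : ℝ => (1 + d) ^ b) (𝓝[>] 0) (𝓝 1) := by
    have : ContinuousAt (fun d : ℝ => (1 + d) ^ b) 0 :=
      (by fun_prop : ContinuousAt (fun d : ℝ => 1 + d) 0).rpow_const (Or.inr hb.le)
    simpa [ContinuousAt] using this.tendsto.mono_left nhdsWithin_le_nhds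
  have c2 : Tendsto (fun d : ℝ => (1 - d) ^ b) (𝓝[>] 0) (𝓝 1) := by
    have : ContinuousAt (fun d : ℝ => (1 - d) ^ b) 0 :=
      (by fun_prop : ContinuousAt (fun d : ℝ => 1 - d) 0).rpow_const (Or.inr hb.le)
    simpa [ContinuousAt] using this.tendsto.mono_left nhdsWithin_le_nhds
  obtain ⟨δ, ⟨h1, h2⟩, hδ0, hδ1⟩ :=
    (((c1.eventually_lt_const (u := 1 + ε) (by linarith)).and
      (c2.eventually_const_lt (u := 1 - ε) (by linarith))).and
      (Ioo_mem_nhdsGT (zero_lt_one (α := ℝ)))).exists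
  have hδi : 0 < δ⁻¹ := inv_pos.2 hδ0
  refine ⟨(1 + δ⁻¹) ^ b, by positivity, fun p hp x y => ?_⟩
  have hp0 : 0 < p := ha.trans_le hp.1
  have hx : 0 ≤ |x| ^ p := by positivity
  have hy : 0 ≤ |y| ^ p := by positivity
  rcases le_total |y| (δ * |x|) with h | h
  · have u1 : |x + y| ^ p ≤ (1 + ε) * |x| ^ p := by
      calc |x + y| ^ p ≤ ((1 + δ) * |x|) ^ p :=
            Real.rpow_le_rpow (abs_nonneg _) (by linarith [abs_add_le x y]) hp0.le
        _ = (1 + δ) ^ p * |x| ^ p := Real.mul_rpow (by linarith) (abs_nonneg _)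
        _ ≤ (1 + ε) * |x| ^ p := by
            refine mul_le_mul_of_nonneg_right ?_ hx
            exact (Real.rpow_le_rpow_of_exponent_le (by linarith) hp.2).trans h1.le
    have u2 : (1 - ε) * |x| ^ p ≤ |x + y| ^ p := by
      calc (1 - ε) * |x| ^ p ≤ (1 - δ) ^ p * |x| ^ p := by
            refine mul_le_mul_of_nonneg_right ?_ hx
            exact h2.le.trans
              (Real.rpow_le_rpow_of_exponent_ge (by linarith) (by linarith) hp.2)
        _ = ((1 - δ) * |x|) ^ p := (Real.mul_rpow (by linarith) (abs_nonneg _)).symm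
        _ ≤ |x + y| ^ p := by
            refine Real.rpow_le_rpow (mul_nonneg (by linarith) (abs_nonneg _)) ?_ hp0.le
            have := abs_sub_abs_le_abs_sub x (-y)
            rw [abs_neg, sub_neg_eq_add] at this
            linarith
    have : 0 ≤ (1 + δ⁻¹) ^ b * |y| ^ p := by positivity
    rw [abs_le]
    constructor <;> linarith
  · have hx' : |x| ≤ δ⁻¹ * |y| := by
      rw [inv_mul_eq_div, le_div_iff₀ hδ0]
      linarith
    have key : ∀ s : ℝ, |s| ≤ (1 + δ⁻¹) * |y| → |s| ^ p ≤ (1 + δ⁻¹) ^ b * |y| ^ p := by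
      intro s hs
      calc |s| ^ p ≤ ((1 + δ⁻¹) * |y|) ^ p := Real.rpow_le_rpow (abs_nonneg _) hs hp0.le
        _ = (1 + δ⁻¹) ^ p * |y| ^ p := Real.mul_rpow (by positivity) (abs_nonneg _)
        _ ≤ _ := mul_le_mul_of_nonneg_right
            (Real.rpow_le_rpow_of_exponent_le (by linarith) hp.2) hy
    have k1 := key x (by linarith [abs_nonneg y])
    have k2 := key (x + y) (by linarith [abs_add_le x y])
    have : 0 ≤ ε * |x| ^ p := by positivity
    have : 0 ≤ |x + y| ^ p := by positivity
    rw [abs_le]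
    constructor <;> linarith

/-- If `∫ |G_r - K|^{a,b} → 0` and the exponents `β_r ∈ [a, b]` converge pointwise to `p`, then
`∫ |G_r| ^ β_r → ∫ |K| ^ p`. -/
lemma tendsto_integral_rpow {a b : ℝ} (ha : 0 < a) (hab : a ≤ b) {l : Filter ℝ}
    [l.IsCountablyGenerated] {G β : ℝ → ℝ → ℝ} {K : ℝ → ℝ} {p : ℝ} (hp : p ∈ Set.Icc a b)
    (hK : MemFab a b K) (hG : ∀ᶠ r in l, Measurable (G r))
    (hGi : ∀ᶠ r in l, Integrable (fun z => pab a b (G r z - K z)))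
    (hlim : Tendsto (fun r => ∫ z, pab a b (G r z - K z)) l (𝓝 0))
    (hβ : ∀ r, Measurable (β r)) (hβI : ∀ r z, β r z ∈ Set.Icc a b)
    (hβl : ∀ z, Tendsto (fun r => β r z) l (𝓝 p)) :
    Tendsto (fun r => ∫ z, |G r z| ^ β r z) l (𝓝 (∫ z, |K z| ^ p)) := by
  obtain ⟨hKm, hKi⟩ := hK
  have hKβ : Tendsto (fun r => ∫ z, |K z| ^ β r z) l (𝓝 (∫ z, |K z| ^ p)) := by
    refine tendsto_integral_filter_of_dominated_convergence (fun z => pab a b (K z))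
      (Eventually.of_forall fun r => ?_) (Eventually.of_forall fun r => ae_of_all _ fun z => ?_)
      hKi (ae_of_all _ fun z => ?_)
    · have := hβ r
      exact (by fun_prop : Measurable fun z => |K z| ^ β r z).aestronglyMeasurable
    · rw [Real.norm_of_nonneg (Real.rpow_nonneg (abs_nonneg _) _)]
      exact rpow_le_pab (hβI r z) _ ha
    · exact tendsto_const_nhds.rpow (hβl z) (Or.inr (ha.trans_le hp.1))
  have hdiff : Tendsto (fun r => (∫ z, |G r z| ^ β r z) - ∫ z, |K z| ^ β r z) l (𝓝 0) := by
    rw [Metric.tendsto_nhds]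
    intro e he
    have hI : 0 ≤ ∫ z, pab a b (K z) := integral_nonneg fun z => pab_nonneg _
    set I := ∫ z, pab a b (K z) with hIdef
    obtain ⟨C, hC, hCx⟩ := abs_rpow_add_sub_le ha hab (ε := e / (2 * (I + 1))) (by positivity)
    have hlimC : Tendsto (fun r => C * ∫ z, pab a b (G r z - K z)) l (𝓝 0) := by
      simpa using hlim.const_mul C
    filter_upwards [hG, hGi, hlimC.eventually_lt_const (half_pos he)] with r hm hi hr
    have hGab : Integrable (fun z => pab a b (G r z)) := by
      have := integrable_pab_sum ha hab ![1, 1] (g := ![fun z => G r z - K z, K])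
        (by intro j; fin_cases j <;> simp <;> fun_prop)
        (by intro j; fin_cases j <;> simpa)
      simpa [Fin.sum_univ_two] using this
    have i1 : Integrable (fun z => |G r z| ^ β r z) :=
      integrable_rpow_of_pab ha hm hGab (hβ r) (hβI r)
    have i2 : Integrable (fun z => |K z| ^ β r z) :=
      integrable_rpow_of_pab ha hKm hKi (hβ r) (hβI r)
    rw [Real.dist_eq, sub_zero, ← integral_sub i1 i2]
    have hbound : ∀ z, |(|G r z| ^ β r z - |K z| ^ β r z)| ≤
        e / (2 * (I + 1)) * pab a b (K z) + C * pab a b (G r z - K z) := by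
      intro z
      have h := hCx (β r z) (hβI r z) (K z) (G r z - K z)
      rw [add_sub_cancel] at h
      refine h.trans (add_le_add ?_ ?_)
      · exact mul_le_mul_of_nonneg_left (rpow_le_pab (hβI r z) _ ha) (by positivity)
      · exact mul_le_mul_of_nonneg_left (rpow_le_pab (hβI r z) _ ha) hC
    calc |∫ z, (|G r z| ^ β r z - |K z| ^ β r z)|
        ≤ ∫ z, |(|G r z| ^ β r z - |K z| ^ β r z)| := abs_integral_le_integral_abs
      _ ≤ ∫ z, (e / (2 * (I + 1)) * pab a b (K z) + C * pab a b (G r z - K z)) :=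
          integral_mono (i1.sub i2).abs ((hKi.const_mul _).add (hi.const_mul _)) hbound
      _ = e / (2 * (I + 1)) * I + C * ∫ z, pab a b (G r z - K z) := by
          rw [integral_add (hKi.const_mul _) (hi.const_mul _), integral_const_mul,
            integral_const_mul]
      _ < e := by
          have : e / (2 * (I + 1)) * I ≤ e / 2 := by
            rw [div_mul_eq_mul_div, div_le_div_iff₀ (by positivity) two_pos]
            nlinarith
          linarith
  simpa using hdiff.add hKβ

/-! ### The rescaled kernels -/

lemma measurable_rescaled {α f₁ f₂ : ℝ → ℝ} (hα : Measurable α) (h₁ : Measurable f₁)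
    (h₂ : Measurable f₂) (u h₀ r : ℝ) :
    Measurable fun z => (f₁ (u + r * z) - f₂ (u + r * z)) / r ^ (h₀ - 1 / α (u + r * z)) := by
  fun_prop

/-- For `0 < r < 1` the factor `r ^ (-(h₀ - 1 / α))` is at most `r ^ (-(h₀ - 1 / b))`, so rescaling
preserves integrability of the gauge. -/
lemma integrable_pab_rescaled {a b : ℝ} (ha : 0 < a) (hab : a ≤ b) {α f₁ f₂ : ℝ → ℝ}
    (hα : Measurable α) (hαI : ∀ x, α x ∈ Set.Icc a b) (h₁ : MemFab a b f₁) (h₂ : MemFab a b f₂)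
    {u h₀ r : ℝ} (hr : r ∈ Set.Ioo (0 : ℝ) 1) :
    Integrable fun z => pab a b
      ((f₁ (u + r * z) - f₂ (u + r * z)) / r ^ (h₀ - 1 / α (u + r * z))) := by
  have hcomp : ∀ {g : ℝ → ℝ}, MemFab a b g → Integrable fun z => pab a b (g (u + r * z)) :=
    fun {g} hg => (hg.2.comp_add_left u).comp_mul_left' hr.1.ne'
  refine Integrable.mono' (((hcomp h₁).add (hcomp h₂)).const_mul
    (pab a b (r ^ (-(h₀ - 1 / b))) * pab a b 2)) ?_ (ae_of_all _ fun z => ?_)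
  · exact (measurable_pab.comp (measurable_rescaled hα h₁.1 h₂.1 u h₀ r)).aestronglyMeasurable
  · rw [Real.norm_of_nonneg (pab_nonneg _), div_eq_inv_mul, ← Real.rpow_neg hr.1.le, mul_assoc]
    refine (pab_mul_le _ _).trans (mul_le_mul (pab_mono ha hab ?_) (pab_sub_le ha hab _ _)
      (pab_nonneg _) (pab_nonneg _))
    have hαz := hαI (u + r * z)
    rw [abs_of_pos (Real.rpow_pos_of_pos hr.1 _), abs_of_pos (Real.rpow_pos_of_pos hr.1 _)]
    refine Real.rpow_le_rpow_of_exponent_ge hr.1 hr.2.le ?_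
    have := one_div_le_one_div_of_le (ha.trans_le hαz.1) hαz.2
    linarith

/-- The substitution `x = u + r z` in the exponent of the rescaled increments. -/
lemma integral_rpow_rescaled {ι : Type*} [Fintype ι] {α : ℝ → ℝ} (hα : ∀ x, 0 < α x)
    (θ : ι → ℝ) (d : ι → ℝ → ℝ) (u h₀ : ℝ) {r : ℝ} (hr : 0 < r) :
    ∫ x, |∑ j, θ j * r ^ (-h₀) * d j x| ^ α x =
      ∫ z, |∑ j, θ j * (d j (u + r * z) / r ^ (h₀ - 1 / α (u + r * z)))| ^ α (u + r * z) := by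
  have hsub : ∀ g : ℝ → ℝ, ∫ x, g x = ∫ z, r * g (u + r * z) := fun g => by
    rw [integral_const_mul, Measure.integral_comp_mul_left (fun y => g (u + y)) r,
      integral_add_left_eq_self, abs_of_pos (inv_pos.2 hr), smul_eq_mul,
      mul_inv_cancel_left₀ hr.ne']
  rw [hsub]
  refine integral_congr_ae (ae_of_all _ fun z => ?_)
  beta_reduce
  generalize u + r * z = x
  have hsum : ∑ j, θ j * (d j x / r ^ (h₀ - 1 / α x)) =
      r ^ (1 / α x) * ∑ j, θ j * r ^ (-h₀) * d j x := by
    rw [Finset.mul_sum]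
    refine Finset.sum_congr rfl fun j _ => ?_
    rw [div_eq_mul_inv, ← Real.rpow_neg hr.le, neg_sub, sub_eq_add_neg, Real.rpow_add hr]
    ring
  have hpos := Real.rpow_pos_of_pos hr (1 / α x)
  rw [hsum, abs_mul, abs_of_pos hpos, Real.mul_rpow hpos.le (abs_nonneg _), ← Real.rpow_mul hr.le,
    one_div_mul_cancel (hα x).ne', Real.rpow_one]

/-! ### Weak convergence -/

/-- Lévy's continuity theorem on `Fin m → ℝ` with explicit characteristic functions, obtained from
the inner product space version on `EuclideanSpace ℝ (Fin m)`. -/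
lemma tendsto_integral_of_tendsto_charFun {m : ℕ} {μ : ℕ → Measure (Fin m → ℝ)}
    {μ₀ : Measure (Fin m → ℝ)} (hμ : ∀ n, IsProbabilityMeasure (μ n))
    (hμ₀ : IsProbabilityMeasure μ₀)
    (h : ∀ θ : Fin m → ℝ,
      Tendsto (fun n => ∫ y, Complex.exp (Complex.I * ((∑ j, θ j * y j : ℝ) : ℂ)) ∂(μ n)) atTop
        (𝓝 (∫ y, Complex.exp (Complex.I * ((∑ j, θ j * y j : ℝ) : ℂ)) ∂μ₀)))
    (F : (Fin m → ℝ) →ᵇ ℝ) :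
    Tendsto (fun n => ∫ y, F y ∂(μ n)) atTop (𝓝 (∫ y, F y ∂μ₀)) := by
  let T : (Fin m → ℝ) → EuclideanSpace ℝ (Fin m) := WithLp.toLp 2
  have hTc : Continuous T := PiLp.continuous_toLp 2 _
  have hTm : Measurable T := hTc.measurable
  let P : ℕ → ProbabilityMeasure (EuclideanSpace ℝ (Fin m)) := fun n =>
    ⟨(μ n).map T, Measure.isProbabilityMeasure_map hTm.aemeasurable⟩
  let P₀ : ProbabilityMeasure (EuclideanSpace ℝ (Fin m)) :=
    ⟨μ₀.map T, Measure.isProbabilityMeasure_map hTm.aemeasurable⟩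
  have hchar : ∀ (ρ : Measure (Fin m → ℝ)) (s : EuclideanSpace ℝ (Fin m)),
      charFun (ρ.map T) s = ∫ y, Complex.exp (Complex.I * ((∑ j, s j * y j : ℝ) : ℂ)) ∂ρ := by
    intro ρ s
    rw [charFun_apply, integral_map hTm.aemeasurable
      (Continuous.aestronglyMeasurable (by fun_prop))]
    refine integral_congr_ae (ae_of_all _ fun y => ?_)
    simp [T, PiLp.inner_apply, mul_comm]
  have hP : Tendsto P atTop (𝓝 P₀) := by
    rw [ProbabilityMeasure.tendsto_iff_tendsto_charFun]
    intro s
    simp only [P, P₀, ProbabilityMeasure.coe_mk, hchar]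
    exact h s
  have hF := ProbabilityMeasure.tendsto_iff_forall_integral_tendsto.1 hP
    (F.compContinuous ⟨WithLp.ofLp, PiLp.continuous_ofLp 2 _⟩)
  have hint : ∀ ρ : Measure (Fin m → ℝ),
      ∫ x, (F.compContinuous ⟨WithLp.ofLp, PiLp.continuous_ofLp 2 _⟩) x ∂(ρ.map T) =
        ∫ y, F y ∂ρ := by
    intro ρ
    rw [integral_map hTm.aemeasurable (BoundedContinuousFunction.continuous _).aestronglyMeasurable]
    rfl
  simpa only [P, P₀, ProbabilityMeasure.coe_mk, hint] using hF

/-- main localisability theorem: under the kernel convergence condition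
(3.4), the finite-dimensional distributions `ν_r` of the rescaled increments
`r^{-h₀}(Y(u+rt) − Y(u))` of the multistable process `Y(t) = ∫ f(t,x)dM_α(x)` converge
weakly as `r → 0⁺` to the distributions `ν₀` of the α(u)-stable process
`Y'_u(t) = ∫ k(t,z) dM_{α(u)}(z)`; i.e. `Y` is `h₀`-localisable at `u`. -/
theorem multistable_process_localisable (a b : ℝ) (ha : 0 < a) (hab : a ≤ b) (hb : b ≤ 2)
    (α : ℝ → ℝ) (hαc : Continuous α) (hα : ∀ x, α x ∈ Set.Icc a b)
    (u h₀ : ℝ) (hh₀ : 0 < h₀)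
    (f : ℝ → ℝ → ℝ) (hf : ∀ t, MemFab a b (f t))
    (k : ℝ → ℝ → ℝ) (hkm : Measurable (Function.uncurry k)) (hk : ∀ t, MemFab a b (k t))
    (hlim : ∀ t : ℝ,
      Tendsto (fun r : ℝ => ∫ z : ℝ,
          pab a b ((f (u + r * t) (u + r * z) - f u (u + r * z)) /
            r ^ (h₀ - 1 / α (u + r * z)) - k t z))
        (𝓝[>] (0:ℝ)) (𝓝 0))
    (m : ℕ) (t : Fin m → ℝ)
    (ν : ℝ → Measure (Fin m → ℝ)) (hνp : ∀ r > (0:ℝ), IsProbabilityMeasure (ν r))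
    (hνCF : ∀ r > (0:ℝ), ∀ θ : Fin m → ℝ,
      ∫ y, Complex.exp (Complex.I * ((∑ j, θ j * y j : ℝ) : ℂ)) ∂(ν r) =
        ((Real.exp
          (-(∫ x : ℝ, |∑ j, θ j * r ^ (-h₀) * (f (u + r * t j) x - f u x)| ^ α x)) : ℝ) : ℂ))
    (ν₀ : Measure (Fin m → ℝ)) (hν₀p : IsProbabilityMeasure ν₀)
    (hν₀CF : ∀ θ : Fin m → ℝ,
      ∫ y, Complex.exp (Complex.I * ((∑ j, θ j * y j : ℝ) : ℂ)) ∂ν₀ =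
        ((Real.exp (-(∫ z : ℝ, |∑ j, θ j * k (t j) z| ^ α u)) : ℝ) : ℂ)) :
    ∀ F : (Fin m → ℝ) →ᵇ ℝ,
      Tendsto (fun r => ∫ y, F y ∂(ν r)) (𝓝[>] (0:ℝ)) (𝓝 (∫ y, F y ∂ν₀)) := by
  intro F
  have hpos : ∀ᶠ r : ℝ in 𝓝[>] 0, r ∈ Set.Ioo (0 : ℝ) 1 := Ioo_mem_nhdsGT zero_lt_one
  have hαpos : ∀ x, 0 < α x := fun x => ha.trans_le (hα x).1
  have hexp : ∀ θ : Fin m → ℝ, Tendsto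
      (fun r : ℝ => ∫ x, |∑ j, θ j * r ^ (-h₀) * (f (u + r * t j) x - f u x)| ^ α x)
      (𝓝[>] 0) (𝓝 (∫ z, |∑ j, θ j * k (t j) z| ^ α u)) := by
    intro θ
    let D : Fin m → ℝ → ℝ → ℝ := fun j r z =>
      (f (u + r * t j) (u + r * z) - f u (u + r * z)) / r ^ (h₀ - 1 / α (u + r * z))
    have hDm : ∀ j r, Measurable (D j r) := fun j r =>
      measurable_rescaled hαc.measurable (hf _).1 (hf _).1 u h₀ r
    have hDk : ∀ j, ∀ r ∈ Set.Ioo (0 : ℝ) 1,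
        Integrable fun z => pab a b (D j r z - k (t j) z) := by
      intro j r hr
      refine Integrable.mono' (((integrable_pab_rescaled ha hab hαc.measurable hα
        (hf (u + r * t j)) (hf u) (u := u) (h₀ := h₀) hr).add (hk (t j)).2).const_mul (pab a b 2))
        ?_ (ae_of_all _ fun z => ?_)
      · exact (measurable_pab.comp ((hDm j r).sub (hk (t j)).1)).aestronglyMeasurable
      · rw [Real.norm_of_nonneg (pab_nonneg _)]
        exact pab_sub_le ha hab _ _
    have hsub : ∀ r z, (∑ j, θ j * D j r z) - ∑ j, θ j * k (t j) z =
        ∑ j, θ j * (D j r z - k (t j) z) := fun r z => by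
      simp only [mul_sub, Finset.sum_sub_distrib]
    have hDmk : ∀ j r, Measurable fun z => D j r z - k (t j) z := fun j r =>
      (hDm j r).sub (hk (t j)).1
    have main : Tendsto (fun r : ℝ => ∫ z, |∑ j, θ j * D j r z| ^ α (u + r * z)) (𝓝[>] 0)
        (𝓝 (∫ z, |∑ j, θ j * k (t j) z| ^ α u)) := by
      refine tendsto_integral_rpow ha hab (G := fun r z => ∑ j, θ j * D j r z)
        (β := fun r z => α (u + r * z)) (hα u) ⟨?_, ?_⟩ ?_ ?_ ?_ ?_ (fun r z => hα _) ?_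
      · exact Finset.measurable_fun_sum _ fun j _ => (hk (t j)).1.const_mul _
      · exact integrable_pab_sum ha hab θ (fun j => (hk (t j)).1) fun j => (hk (t j)).2
      · exact Eventually.of_forall fun r =>
          Finset.measurable_fun_sum _ fun j _ => (hDm j r).const_mul _
      · filter_upwards [hpos] with r hr
        simp only [hsub]
        exact integrable_pab_sum ha hab θ (hDmk · r) fun j => hDk j r hr
      · simp only [hsub]
        have hup : Tendsto (fun r : ℝ => pab a b (∑ j, |θ j|) *
            ∑ j, ∫ z, pab a b (D j r z - k (t j) z)) (𝓝[>] 0) (𝓝 0) := by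
          have h := (tendsto_finsetSum Finset.univ fun j _ => hlim (t j)).const_mul
            (pab a b (∑ j, |θ j|))
          rwa [Finset.sum_const_zero, mul_zero] at h
        refine squeeze_zero' (Eventually.of_forall fun r => integral_nonneg fun z => pab_nonneg _)
          ?_ hup
        filter_upwards [hpos] with r hr
        rw [← integral_finsetSum _ fun j _ => hDk j r hr, ← integral_const_mul]
        exact integral_mono (integrable_pab_sum ha hab θ (hDmk · r) fun j => hDk j r hr)
          ((integrable_finsetSum _ fun j _ => hDk j r hr).const_mul _)
          fun z => pab_sum_le ha hab _ _
      · intro r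
        exact hαc.measurable.comp (by fun_prop)
      · intro z
        have : Continuous fun r : ℝ => α (u + r * z) := by fun_prop
        simpa using (this.tendsto 0).mono_left nhdsWithin_le_nhds
    refine main.congr' ?_
    filter_upwards [hpos] with r hr
    exact (integral_rpow_rescaled hαpos θ (fun j x => f (u + r * t j) x - f u x) u h₀ hr.1).symm
  refine tendsto_of_seq_tendsto fun x hx => ?_
  have hxpos : ∀ᶠ n in atTop, 0 < x n := hx.eventually self_mem_nhdsWithin
  obtain ⟨N, hN⟩ := eventually_atTop.1 hxpos
  have hx' := (tendsto_add_atTop_iff_nat N).2 hx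
  -- `ν r` is only known to be a probability measure for `r > 0`, hence the shift by `N`.
  rw [← tendsto_add_atTop_iff_nat N]
  have hpN : ∀ n, 0 < x (n + N) := fun n => hN _ (Nat.le_add_left N n)
  refine tendsto_integral_of_tendsto_charFun (fun n => hνp _ (hpN n)) hν₀p (fun θ => ?_) F
  rw [hν₀CF]
  simp only [hνCF _ (hpN _)]
  exact (Complex.continuous_ofReal.tendsto _).comp
    ((Real.continuous_exp.tendsto _).comp ((hexp θ).comp hx').neg)
end
end

section
/- Let 0 < a ≤ b. There is a constant c > 0 depending only on a and b such that for every Lebesgue measurable α : ℝ → [a,b] and all g, k ∈ F_{a,b}, | ∫_ℝ |g(x)|^{α(x)} dx − ∫_ℝ |k(x)|^{α(x)} dx | ≤ c ( ‖g−k‖_a ‖k‖_a^{max{0, a−1}} + ‖g−k‖_a^a + ‖g−k‖_b ‖k‖_b^{max{0, b−1}} + ‖g−k‖_b^b ). -/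
/-! The two integrals are compared pointwise. Write `d = |g - k|`. For `α ≤ 1`, subadditivity of
`t ↦ t ^ α` bounds `||g|^α - |k|^α|` by `d ^ α`; for `α ≥ 1`, Bernoulli's inequality bounds it by a
constant times `d * |k| ^ (α - 1) + d ^ α`. Powers with exponent `α ∈ [a, b]` are then dominated by
the sum of the powers at the two endpoints (`rpow_le_add_rpow`), which removes the dependence on `α`
and gives the bound `abs_rpow_sub_rpow_le`. The cross term `d * |k| ^ (p - 1)` is kept
only for `p ≥ 1` (`cross`): when `a < 1 < α`, its part with `|k| ≤ 1` is at most `d ≤ d ^ a + d ^ b`.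
Integrating, Hölder's inequality with exponents `p` and `p / (p - 1)` turns the cross
terms into `‖g - k‖_p ‖k‖_p ^ (p - 1)` (`integral_cross_le`). -/

open MeasureTheory Filter Set Topology ProbabilityTheory BoundedContinuousFunction

noncomputable section

/-! ### Pointwise inequalities for real powers -/

lemma rpow_le_add_rpow {x p a b : ℝ} (hx : 0 ≤ x) (hp : 0 < p) (h1 : a ≤ p) (h2 : p ≤ b) :
    x ^ p ≤ x ^ a + x ^ b := by
  have ha := Real.rpow_nonneg hx a
  have hb := Real.rpow_nonneg hx b
  rcases hx.eq_or_lt with rfl | hx0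
  · rw [Real.zero_rpow hp.ne']; positivity
  rcases le_total x 1 with h | h
  · linarith [Real.rpow_le_rpow_of_exponent_ge hx0 h h1]
  · linarith [Real.rpow_le_rpow_of_exponent_le h h2]

lemma rpow_max_le {x y p : ℝ} (hx : 0 ≤ x) (hy : 0 ≤ y) : (max x y) ^ p ≤ x ^ p + y ^ p := by
  have ha := Real.rpow_nonneg hx p
  have hb := Real.rpow_nonneg hy p
  rcases le_total x y with h | h
  · rw [max_eq_right h]; linarith
  · rw [max_eq_left h]; linarith

/-- A form of Bernoulli's inequality: the mean value bound for `t ↦ t ^ p`. -/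
lemma rpow_sub_rpow_le_mul {u v p : ℝ} (hv : 0 ≤ v) (huv : v ≤ u) (hp : 1 ≤ p) :
    u ^ p - v ^ p ≤ p * u ^ (p - 1) * (u - v) := by
  rcases (hv.trans huv).eq_or_lt with h0 | h0
  · obtain rfl : v = u := by linarith
    simp
  have hB := one_add_mul_self_le_rpow_one_add (s := v / u - 1)
    (by have := div_nonneg hv h0.le; linarith) hp
  rw [show 1 + (v / u - 1) = v / u by ring, Real.div_rpow hv h0.le] at hB
  have hup : 0 < u ^ p := Real.rpow_pos_of_pos h0 p
  rw [le_div_iff₀ hup] at hB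
  rw [Real.rpow_sub_one h0.ne']
  have : (1 + p * (v / u - 1)) * u ^ p = u ^ p - p * (u ^ p / u) * (u - v) := by
    field_simp
    ring
  linarith

lemma rpow_sub_rpow_le_of_le_one {u v p : ℝ} (hv : 0 ≤ v) (huv : v ≤ u) (hp : 0 ≤ p)
    (hp1 : p ≤ 1) : u ^ p - v ^ p ≤ (u - v) ^ p := by
  have := Real.rpow_add_le_add_rpow hv (sub_nonneg.2 huv) hp hp1
  rw [add_sub_cancel] at this
  linarith

/-- For `p ≥ 1`, `|x^p - y^p|` is at most `b 2^b (d y^(p-1) + d^p)` when `x, y ≥ 0` and `|x - y| ≤ d`;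
here `u`, `v` are the larger and the smaller of `x`, `y`. -/
lemma rpow_sub_rpow_le_of_one_le {u v y d p b : ℝ} (hv : 0 ≤ v) (huv : v ≤ u) (hd : u - v ≤ d)
    (hy : 0 ≤ y) (hu : u ≤ y + d) (hp : 1 ≤ p) (hpb : p ≤ b) :
    u ^ p - v ^ p ≤ b * 2 ^ b * (d * y ^ (p - 1) + d ^ p) := by
  have hd0 : 0 ≤ d := by linarith
  have hu0 : 0 ≤ u := hv.trans huv
  have hm : u ≤ 2 * max y d := by linarith [le_max_left y d, le_max_right y d]
  have h1 : u ^ (p - 1) ≤ 2 ^ b * (y ^ (p - 1) + d ^ (p - 1)) := by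
    calc u ^ (p - 1) ≤ (2 * max y d) ^ (p - 1) :=
          Real.rpow_le_rpow hu0 hm (by linarith)
      _ = 2 ^ (p - 1) * (max y d) ^ (p - 1) :=
          Real.mul_rpow (by norm_num) (le_max_of_le_left hy)
      _ ≤ _ := by
          apply mul_le_mul _ (rpow_max_le hy hd0) (Real.rpow_nonneg (le_max_of_le_left hy) _)
            (by positivity)
          exact Real.rpow_le_rpow_of_exponent_le (by norm_num) (by linarith)
  have h2 : d ^ (p - 1) * d = d ^ p := by
    rw [← Real.rpow_add_one' hd0 (by linarith)]; ring_nf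
  calc u ^ p - v ^ p ≤ p * u ^ (p - 1) * (u - v) := rpow_sub_rpow_le_mul hv huv hp
    _ ≤ b * (2 ^ b * (y ^ (p - 1) + d ^ (p - 1))) * d := by
        have := Real.rpow_nonneg hu0 (p - 1)
        gcongr
        · exact mul_nonneg (by linarith) (this.trans h1)
        · linarith
    _ = b * 2 ^ b * (d * y ^ (p - 1) + d ^ (p - 1) * d) := by ring
    _ = _ := by rw [h2]

/-- The cross term `d * y ^ (p - 1)`, set to zero for `p < 1`. -/
def cross (p d y : ℝ) : ℝ := if 1 ≤ p then d * y ^ (p - 1) else 0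

lemma cross_nonneg {p d y : ℝ} (hd : 0 ≤ d) (hy : 0 ≤ y) : 0 ≤ cross p d y := by
  unfold cross
  split_ifs
  · exact mul_nonneg hd (Real.rpow_nonneg hy _)
  · exact le_rfl

lemma mul_rpow_le_cross {a b p d y : ℝ} (h1 : a ≤ p) (h2 : p ≤ b) (hp : 1 < p)
    (hd : 0 ≤ d) (hy : 0 ≤ y) :
    d * y ^ (p - 1) ≤ cross a d y + cross b d y + (d ^ a + d ^ b) := by
  have hb : cross b d y = d * y ^ (b - 1) := if_pos (hp.le.trans h2)
  have hda := Real.rpow_nonneg hd a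
  have hdb := Real.rpow_nonneg hd b
  have hca : 0 ≤ cross a d y := cross_nonneg hd hy
  have hcb : 0 ≤ cross b d y := cross_nonneg hd hy
  by_cases ha1 : 1 ≤ a
  · have h : y ^ (p - 1) ≤ y ^ (a - 1) + y ^ (b - 1) :=
      rpow_le_add_rpow hy (by linarith) (by linarith) (by linarith)
    have hae : cross a d y = d * y ^ (a - 1) := if_pos ha1
    nlinarith [mul_le_mul_of_nonneg_left h hd]
  · rcases le_total y 1 with h | h
    · have h3 : y ^ (p - 1) ≤ 1 := Real.rpow_le_one hy h (by linarith)
      have h4 : d ^ (1 : ℝ) ≤ d ^ a + d ^ b :=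
        rpow_le_add_rpow hd one_pos (by linarith) (by linarith)
      rw [Real.rpow_one] at h4
      nlinarith [mul_le_mul_of_nonneg_left h3 hd]
    · have h3 : y ^ (p - 1) ≤ y ^ (b - 1) :=
        Real.rpow_le_rpow_of_exponent_le h (by linarith)
      nlinarith [mul_le_mul_of_nonneg_left h3 hd]

/-- The pointwise inequality behind the theorem; its right-hand side does not involve `p`. -/
lemma abs_rpow_sub_rpow_le {a b p s t : ℝ} (ha : 0 < a) (h1 : a ≤ p) (h2 : p ≤ b) :
    abs (|s| ^ p - |t| ^ p) ≤ (2 * (b * 2 ^ b) + 1) *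
      (cross a |s - t| |t| + |s - t| ^ a + cross b |s - t| |t| + |s - t| ^ b) := by
  have hb : 0 < b := by linarith
  -- `|s|` and `|t|` are ordered so that only one-sided differences have to be bounded.
  obtain ⟨u, v, hv, huv, hd, hu, he⟩ : ∃ u v : ℝ, 0 ≤ v ∧ v ≤ u ∧ u - v ≤ |s - t| ∧
      u ≤ |t| + |s - t| ∧ abs (|s| ^ p - |t| ^ p) = u ^ p - v ^ p := by
    have hst := abs_sub_abs_le_abs_sub s t
    have hts := abs_sub_abs_le_abs_sub t s
    rw [abs_sub_comm t s] at hts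
    rcases le_total |t| |s| with h | h
    · refine ⟨|s|, |t|, abs_nonneg _, h, hst, by linarith, abs_of_nonneg ?_⟩
      exact sub_nonneg.2 (Real.rpow_le_rpow (abs_nonneg _) h (by linarith))
    · refine ⟨|t|, |s|, abs_nonneg _, h, hts, by linarith [abs_nonneg (s - t)], ?_⟩
      rw [abs_sub_comm]
      exact abs_of_nonneg
        (sub_nonneg.2 (Real.rpow_le_rpow (abs_nonneg _) h (by linarith)))
  rw [he]
  have hd0 := abs_nonneg (s - t)
  have ht0 := abs_nonneg t
  generalize |s - t| = d at *
  generalize |t| = y at *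
  have hda := Real.rpow_nonneg hd0 a
  have hdb := Real.rpow_nonneg hd0 b
  have hca : 0 ≤ cross a d y := cross_nonneg hd0 ht0
  have hcb : 0 ≤ cross b d y := cross_nonneg hd0 ht0
  have hC : 0 ≤ b * 2 ^ b := by positivity
  have hdp : d ^ p ≤ d ^ a + d ^ b := rpow_le_add_rpow hd0 (by linarith) h1 h2
  rcases le_or_gt p 1 with hp | hp
  · have h3 := rpow_sub_rpow_le_of_le_one hv huv (by linarith) hp
    have h4 : (u - v) ^ p ≤ d ^ p := Real.rpow_le_rpow (by linarith) hd (by linarith)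
    have h5 : 0 ≤ 2 * (b * 2 ^ b) * (cross a d y + d ^ a + cross b d y + d ^ b) := by positivity
    linarith
  · have h3 := rpow_sub_rpow_le_of_one_le hv huv hd ht0 hu hp.le h2
    have h4 := mul_rpow_le_cross h1 h2 hp hd0 ht0
    have h5 : d * y ^ (p - 1) + d ^ p ≤
        2 * (cross a d y + d ^ a + cross b d y + d ^ b) := by linarith
    have h6 := mul_le_mul_of_nonneg_left h5 hC
    have h7 : 0 ≤ cross a d y + d ^ a + cross b d y + d ^ b := by positivity
    linarith

/-! ### Integrability and Hölder's inequality -/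

lemma MemFab.integrable_rpow {a b : ℝ} {f α : ℝ → ℝ} (ha : 0 < a) (hf : MemFab a b f)
    (hα : Measurable α) (h : ∀ x, α x ∈ Set.Icc a b) : Integrable (fun x => |f x| ^ α x) := by
  have hm : Measurable (fun x => |f x|) := hf.1.abs
  refine (hf.2.add hf.2).mono' (hm.pow hα).aestronglyMeasurable (ae_of_all _ fun x => ?_)
  rw [Real.norm_of_nonneg (Real.rpow_nonneg (abs_nonneg _) _)]
  have := rpow_le_add_rpow (abs_nonneg (f x)) (ha.trans_le (h x).1) (h x).1 (h x).2
  exact this.trans (add_le_add (le_max_left _ _) (le_max_right _ _))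

lemma integrable_sub_rpow {p : ℝ} {f g : ℝ → ℝ} (hp : 0 < p) (hf : Measurable f)
    (hg : Measurable g) (hfi : Integrable (fun x => |f x| ^ p))
    (hgi : Integrable (fun x => |g x| ^ p)) : Integrable (fun x => |f x - g x| ^ p) := by
  have hm : Measurable (fun x => |f x - g x|) := (hf.sub hg).abs
  refine ((hfi.add hgi).const_mul (2 ^ p)).mono'
    (hm.pow_const p).aestronglyMeasurable (ae_of_all _ fun x => ?_)
  rw [Real.norm_of_nonneg (Real.rpow_nonneg (abs_nonneg _) _)]
  have hmax : |f x - g x| ≤ 2 * max |f x| |g x| := by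
    linarith [abs_sub (f x) (g x), le_max_left |f x| |g x|, le_max_right |f x| |g x|]
  calc |f x - g x| ^ p ≤ (2 * max |f x| |g x|) ^ p :=
        Real.rpow_le_rpow (abs_nonneg _) hmax hp.le
    _ = 2 ^ p * (max |f x| |g x|) ^ p :=
        Real.mul_rpow (by norm_num) (le_max_of_le_left (abs_nonneg _))
    _ ≤ 2 ^ p * (|f x| ^ p + |g x| ^ p) := by
        gcongr
        exact rpow_max_le (abs_nonneg _) (abs_nonneg _)

lemma integrable_cross {p : ℝ} {d k : ℝ → ℝ} (hd : Measurable d) (hk : Measurable k)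
    (hdi : Integrable (fun x => |d x| ^ p)) (hki : Integrable (fun x => |k x| ^ p)) :
    Integrable (fun x => cross p |d x| |k x|) := by
  unfold cross
  split_ifs with hp
  · have hmd : Measurable (fun x => |d x|) := hd.abs
    have hmk : Measurable (fun x => |k x|) := hk.abs
    refine (hdi.add hki).mono' (hmd.mul (hmk.pow_const _)).aestronglyMeasurable
      (ae_of_all _ fun x => ?_)
    have hd0 := abs_nonneg (d x)
    have hk0 := abs_nonneg (k x)
    rw [Real.norm_of_nonneg (mul_nonneg hd0 (Real.rpow_nonneg hk0 _))]
    -- Both factors are at most the corresponding powers of `max |d x| |k x|`.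
    have hM : 0 ≤ max |d x| |k x| := le_max_of_le_left hd0
    calc |d x| * |k x| ^ (p - 1)
        ≤ max |d x| |k x| * (max |d x| |k x|) ^ (p - 1) := by
          apply mul_le_mul (le_max_left _ _) _ (Real.rpow_nonneg hk0 _) hM
          exact Real.rpow_le_rpow hk0 (le_max_right _ _) (by linarith)
      _ = (max |d x| |k x|) ^ p := by
          rw [mul_comm, ← Real.rpow_add_one' hM (by linarith)]; ring_nf
      _ ≤ _ := rpow_max_le hd0 hk0
  · exact integrable_zero _ _ _

lemma pNorm_nonneg (p : ℝ) (f : ℝ → ℝ) : 0 ≤ pNorm p f :=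
  Real.rpow_nonneg (integral_nonneg fun _ => Real.rpow_nonneg (abs_nonneg _) _) _

lemma pNorm_rpow {p : ℝ} (hp : 0 < p) (f : ℝ → ℝ) : pNorm p f ^ p = ∫ x : ℝ, |f x| ^ p := by
  have h : 0 ≤ ∫ x : ℝ, |f x| ^ p := integral_nonneg fun _ => Real.rpow_nonneg (abs_nonneg _) _
  rw [pNorm, ← Real.rpow_mul h, one_div_mul_cancel hp.ne', Real.rpow_one]

/-- Hölder's inequality for the cross term. -/
lemma integral_cross_le {p : ℝ} {d k : ℝ → ℝ} (hd : Measurable d) (hk : Measurable k)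
    (hdi : Integrable (fun x => |d x| ^ p)) (hki : Integrable (fun x => |k x| ^ p)) :
    ∫ x : ℝ, cross p |d x| |k x| ≤ pNorm p d * pNorm p k ^ max 0 (p - 1) := by
  unfold cross
  split_ifs with hp
  · rw [max_eq_right (by linarith)]
    rcases hp.eq_or_lt with rfl | hp1
    · simp [pNorm]
    have hp0 : 0 < p := by linarith
    have hpq : p.HolderConjugate (p / (p - 1)) := Real.HolderConjugate.conjExponent hp1
    have hq : (p - 1) * (p / (p - 1)) = p := mul_div_cancel₀ _ (by linarith)
    have hmd : Measurable (fun x => |d x|) := hd.abs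
    have hmk : Measurable (fun x => |k x|) := hk.abs
    have hpow : ∀ x, (|k x| ^ (p - 1)) ^ (p / (p - 1)) = |k x| ^ p := fun x => by
      rw [← Real.rpow_mul (abs_nonneg _), hq]
    have hL1 : MemLp (fun x => |d x|) (ENNReal.ofReal p) := by
      rw [← integrable_norm_rpow_iff hmd.aestronglyMeasurable
        (by simpa using hp0) ENNReal.ofReal_ne_top, ENNReal.toReal_ofReal hp0.le]
      simpa using hdi
    have hL2 : MemLp (fun x => |k x| ^ (p - 1)) (ENNReal.ofReal (p / (p - 1))) := by
      rw [← integrable_norm_rpow_iff (hmk.pow_const _).aestronglyMeasurable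
        (by simpa using hpq.symm.pos) ENNReal.ofReal_ne_top,
        ENNReal.toReal_ofReal hpq.symm.nonneg]
      refine hki.congr (ae_of_all _ fun x => ?_)
      simp only
      rw [Real.norm_of_nonneg (Real.rpow_nonneg (abs_nonneg _) _), hpow]
    have hH := integral_mul_le_Lp_mul_Lq_of_nonneg hpq
      (ae_of_all _ fun x => abs_nonneg (d x))
      (ae_of_all _ fun x => Real.rpow_nonneg (abs_nonneg (k x)) (p - 1)) hL1 hL2
    simp only [hpow] at hH
    have hk0 : 0 ≤ ∫ x : ℝ, |k x| ^ p :=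
      integral_nonneg fun _ => Real.rpow_nonneg (abs_nonneg _) _
    rw [pNorm, pNorm, ← Real.rpow_mul hk0,
      show 1 / p * (p - 1) = 1 / (p / (p - 1)) by rw [one_div_div]; ring]
    exact hH
  · simpa using mul_nonneg (pNorm_nonneg p d) (Real.rpow_nonneg (pNorm_nonneg p k) _)

/-- Lemma 3.3: there is `c = c(a,b) > 0` such that for all measurable
`α : ℝ → [a,b]` and `g, k ∈ F_{a,b}`,
`|∫|g|^{α(x)} − ∫|k|^{α(x)}| ≤ c(‖g−k‖_a‖k‖_a^{max{0,a−1}} + ‖g−k‖_a^a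
 + ‖g−k‖_b‖k‖_b^{max{0,b−1}} + ‖g−k‖_b^b)`. -/
theorem exponent_integral_difference_bound (a b : ℝ) (ha : 0 < a) (hab : a ≤ b) :
    ∃ c > (0:ℝ), ∀ (α : ℝ → ℝ), Measurable α → (∀ x, α x ∈ Set.Icc a b) →
      ∀ g k : ℝ → ℝ, MemFab a b g → MemFab a b k →
        |(∫ x : ℝ, |g x| ^ α x) - ∫ x : ℝ, |k x| ^ α x| ≤
          c * (pNorm a (fun x => g x - k x) * pNorm a k ^ max 0 (a - 1) +
               pNorm a (fun x => g x - k x) ^ a +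
               pNorm b (fun x => g x - k x) * pNorm b k ^ max 0 (b - 1) +
               pNorm b (fun x => g x - k x) ^ b) := by
  have hb : 0 < b := by linarith
  refine ⟨2 * (b * 2 ^ b) + 1, by positivity, fun α hα hαI g k hg hk => ?_⟩
  have hC : 0 ≤ 2 * (b * 2 ^ b) + 1 := by positivity
  have hga := hg.integrable_rpow ha measurable_const (fun _ => ⟨le_rfl, hab⟩)
  have hka := hk.integrable_rpow ha measurable_const (fun _ => ⟨le_rfl, hab⟩)
  have hgb := hg.integrable_rpow ha measurable_const (fun _ => ⟨hab, le_rfl⟩)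
  have hkb := hk.integrable_rpow ha measurable_const (fun _ => ⟨hab, le_rfl⟩)
  have hda := integrable_sub_rpow ha hg.1 hk.1 hga hka
  have hdb := integrable_sub_rpow hb hg.1 hk.1 hgb hkb
  have hd : Measurable (fun x => g x - k x) := hg.1.sub hk.1
  have hca := integrable_cross hd hk.1 hda hka
  have hcb := integrable_cross hd hk.1 hdb hkb
  rw [← integral_sub (hg.integrable_rpow ha hα hαI) (hk.integrable_rpow ha hα hαI),
    pNorm_rpow ha, pNorm_rpow hb]
  calc |∫ x : ℝ, (|g x| ^ α x - |k x| ^ α x)|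
      ≤ ∫ x : ℝ, abs (|g x| ^ α x - |k x| ^ α x) := abs_integral_le_integral_abs
    _ ≤ ∫ x : ℝ, (2 * (b * 2 ^ b) + 1) * (cross a |g x - k x| |k x| + |g x - k x| ^ a +
          cross b |g x - k x| |k x| + |g x - k x| ^ b) :=
        integral_mono
          ((hg.integrable_rpow ha hα hαI).sub (hk.integrable_rpow ha hα hαI)).abs
          ((((hca.add hda).add hcb).add hdb).const_mul _)
          (fun x => abs_rpow_sub_rpow_le ha (hαI x).1 (hαI x).2)
    _ = (2 * (b * 2 ^ b) + 1) * ((∫ x : ℝ, cross a |g x - k x| |k x|) +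
          (∫ x : ℝ, |g x - k x| ^ a) + (∫ x : ℝ, cross b |g x - k x| |k x|) +
          ∫ x : ℝ, |g x - k x| ^ b) := by
        rw [integral_const_mul, integral_add (by exact (hca.add hda).add hcb) hdb,
          integral_add (by exact hca.add hda) hcb, integral_add hca hda]
    _ ≤ _ := by
        gcongr
        · exact integral_cross_le hd hk.1 hda hka
        · exact integral_cross_le hd hk.1 hdb hkb
end
end
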